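/- For a prime p and n ≥ 5, the smallest dimension of a nontrivial irreducible complex representation of SL_n(ℤ/pℤ) is (p^n − p)/(p − 1). -/

import Mathlib

open Matrix

/-- A matrix representation `ρ : G →* GL_N(ℂ)` is irreducible if the only invariant
subspaces of `ℂ^N` are `⊥` and `⊤`. -/
def IrredMat {G : Type*} [Group G] {N : ℕ} (ρ : G →* GL (Fin N) ℂ) : Prop :=
  ∀ W : Submodule ℂ (Fin N → ℂ),
    (∀ g : G, ∀ v ∈ W, (ρ g : Matrix (Fin N) (Fin N) ℂ).mulVec v ∈ W) → W = ⊥ ∨ W = ⊤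


namespace TZ
open LinearMap Module

section lemma2
variable {V : Type*} [AddCommGroup V] [Module ℂ V] [FiniteDimensional ℂ V]

/-- restriction to generalized eigenspace -/
noncomputable def res (T : End ℂ V) (μ : ℂ) (a : End ℂ V) (h : Commute T a) :
    End ℂ (T.maxGenEigenspace μ) :=
  a.restrict (T.mapsTo_maxGenEigenspace_of_comm h μ)

lemma trace_idem_nat {W : Type*} [AddCommGroup W] [Module ℂ W] [FiniteDimensional ℂ W]
    (f : End ℂ W) (hf : f * f = f) :
    ∃ k : ℕ, k ≤ finrank ℂ W ∧ trace ℂ W f = k := by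
  refine ⟨finrank ℂ (LinearMap.range f), Submodule.finrank_le _, ?_⟩
  exact LinearMap.IsProj.trace (LinearMap.IsIdempotentElem.isProj_range f hf)

lemma term_half (n y : ℕ) (h : y ≤ n) :
    ((y : ℝ) - (y:ℝ)^2 / n = 0) ∨ (1/2 : ℝ) ≤ (y : ℝ) - (y:ℝ)^2 / n := by
  rcases Nat.eq_zero_or_pos y with h0 | h0
  · left; simp [h0]
  rcases h.eq_or_lt with h1 | h1
  · left; subst h1
    have : (y:ℝ) ≠ 0 := by positivity
    field_simp; ring
  · right
    have hn : (0:ℝ) < n := by exact_mod_cast (by omega : 0 < n)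
    rw [le_sub_iff_add_le, ← le_sub_iff_add_le', div_le_iff₀ hn]
    have a : (1:ℝ) ≤ y := by exact_mod_cast h0
    have b : (y:ℝ) + 1 ≤ n := by exact_mod_cast h1
    nlinarith [mul_nonneg (sub_nonneg.2 a) (sub_nonneg.2 b)]

lemma sum_half {ι : Type*} (s : Finset ι) (t : ι → ℝ) (h : ∀ i ∈ s, t i = 0 ∨ 1/2 ≤ t i) :
    (∑ i ∈ s, t i = 0) ∨ 1/2 ≤ ∑ i ∈ s, t i := by
  by_cases hh : ∀ i ∈ s, t i = 0
  · left; exact Finset.sum_eq_zero hh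
  · right
    push Not at hh
    obtain ⟨i, hi, h1⟩ := hh
    have : t i ≤ ∑ i ∈ s, t i := Finset.single_le_sum (f := t) (fun j hj => by
      rcases h j hj with h | h <;> linarith) hi
    rcases h i hi with h | h
    · exact absurd h h1
    · linarith

theorem lemma2 {Y : Type*} [Fintype Y] (f : Y → End ℂ V)
    (hid : ∀ y, f y * f y = f y)
    (hc : ∀ y, Commute (∑ z, f z) (f y))
    (hconj : ∀ y y', ∃ g h : End ℂ V, h * g = 1 ∧ Commute (∑ z, f z) g ∧
      Commute (∑ z, f z) h ∧ f y * g = g * f y' ∧ g * h = 1)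
    (y0 : Y) (d s : ℂ) (hd : trace ℂ V (f y0) = d)
    (hs : ∀ y, y ≠ y0 → trace ℂ V (f y0 * f y) = s) :
    ∃ Δ : ℝ, (Δ = 0 ∨ 1/2 ≤ Δ) ∧
      ((Fintype.card Y : ℂ) - 1) * (d - s) = (Fintype.card Y : ℂ) * (Δ : ℂ) := by
  classical
  set T := ∑ z, f z with hT
  have hds := DirectSum.isInternal_submodule_of_iSupIndep_of_iSup_eq_top
      T.independent_maxGenEigenspace (Module.End.iSup_maxGenEigenspace_eq_top T)
  have h_fin : {μ | T.maxGenEigenspace μ ≠ ⊥}.Finite :=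
      WellFoundedGT.finite_ne_bot_of_iSupIndep T.independent_maxGenEigenspace
  have htr : ∀ a (ha : Commute T a), trace ℂ V a = ∑ μ ∈ h_fin.toFinset, trace ℂ _ (res T μ a ha) := by
    intro a ha
    exact trace_eq_sum_trace_restrict' hds h_fin (fun μ => T.mapsTo_maxGenEigenspace_of_comm ha μ)
  have hmul : ∀ μ a b (ha : Commute T a) (hb : Commute T b),
      res T μ (a * b) (ha.mul_right hb) = res T μ a ha * res T μ b hb := by
    intro μ a b ha hb; rfl
  -- trace on each eigenspace independent of y
  have hconst : ∀ μ y, trace ℂ _ (res T μ (f y) (hc y)) = trace ℂ _ (res T μ (f y0) (hc y0)) := by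
    intro μ y
    obtain ⟨g, h, hhg, cg, ch, e, hgh⟩ := hconj y y0
    have e1 : res T μ (f y) (hc y) * res T μ g cg = res T μ g cg * res T μ (f y0) (hc y0) := by
      rw [← hmul, ← hmul]; congr 1
    have e2 : res T μ h ch * res T μ g cg = 1 := by
      rw [← hmul]; ext v; simp [res, hhg]
    have e3 : res T μ g cg * res T μ h ch = 1 := by
      rw [← hmul]; ext v; simp [res, hgh]
    calc _ = trace ℂ _ (res T μ (f y) (hc y) * res T μ g cg * res T μ h ch) := by
            rw [mul_assoc, e3, mul_one]
      _ = trace ℂ _ (res T μ h ch * (res T μ g cg * res T μ (f y0) (hc y0))) := by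
            rw [e1, trace_mul_comm]
      _ = _ := by rw [← mul_assoc, e2, one_mul]
  have hmu : ∀ μ a (ha : Commute T a), trace ℂ _ (res T μ (a * T) (ha.mul_right rfl)) =
      μ * trace ℂ _ (res T μ a ha) := by
    intro μ a ha
    have := T.isNilpotent_restrict_maxGenEigenspace_sub_algebraMap μ
    exact trace_comp_eq_mul_of_commute_of_isNilpotent μ
      (restrict_commute ha.symm (T.mapsTo_maxGenEigenspace_of_comm ha μ)
        (T.mapsTo_maxGenEigenspace_of_comm rfl μ)) this
  have hnat : ∀ μ, ∃ k : ℕ, k ≤ finrank ℂ (T.maxGenEigenspace μ) ∧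
      trace ℂ _ (res T μ (f y0) (hc y0)) = k := by
    intro μ
    apply trace_idem_nat
    rw [← hmul]; congr 1; exact hid y0
  choose k hk1 hk2 using hnat
  have hTr : ∀ μ, μ * finrank ℂ (T.maxGenEigenspace μ) = Fintype.card Y * (k μ : ℂ) := by
    intro μ
    have h1 := hmu μ 1 (Commute.one_right _)
    have h2 : res T μ 1 (Commute.one_right _) = 1 := rfl
    rw [h2, LinearMap.trace_one] at h1
    rw [← h1]
    have h3 : res T μ (1 * T) ((Commute.one_right T).mul_right rfl) = ∑ y, res T μ (f y) (hc y) := by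
      ext v
      simp [res]
      exact LinearMap.sum_apply _ _ _
    rw [h3, map_sum]
    simp_rw [hconst, hk2]
    simp
  have hfT : d + ((Fintype.card Y : ℂ) - 1) * s = ∑ μ ∈ h_fin.toFinset, μ * (k μ : ℂ) := by
    have h1 := htr (f y0 * T) ((hc y0).mul_right rfl)
    rw [Finset.sum_congr rfl (fun μ _ => (hmu μ _ (hc y0)).trans (by rw [hk2]))] at h1
    rw [← h1]
    have : trace ℂ V (f y0 * T) = ∑ y, trace ℂ V (f y0 * f y) := by
      rw [hT, Finset.mul_sum, map_sum]
    rw [this, ← Finset.add_sum_erase _ _ (Finset.mem_univ y0), hid, hd]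
    rw [Finset.sum_congr rfl (fun y hy => hs y (Finset.ne_of_mem_erase hy))]
    rw [Finset.sum_const, Finset.card_erase_of_mem (Finset.mem_univ _), nsmul_eq_mul, Finset.card_univ]
    have : 0 < Fintype.card Y := Fintype.card_pos_iff.2 ⟨y0⟩
    push_cast [Nat.cast_sub (show 1 ≤ Fintype.card Y from this)]
    rfl
  have hdk : d = ∑ μ ∈ h_fin.toFinset, (k μ : ℂ) := by
    rw [← hd, htr _ (hc y0)]; simp_rw [hk2]
  refine ⟨∑ μ ∈ h_fin.toFinset, ((k μ : ℝ) - (k μ : ℝ)^2 / (finrank ℂ (T.maxGenEigenspace μ) : ℝ)),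
    sum_half _ _ (fun μ _ => term_half _ _ (hk1 μ)), ?_⟩
  have e1 : ((Fintype.card Y : ℂ) - 1) * (d - s) = Fintype.card Y * d -
    (d + ((Fintype.card Y : ℂ) - 1) * s) := by ring
  rw [e1, hfT, hdk]
  push_cast
  rw [Finset.sum_sub_distrib, mul_sub, Finset.mul_sum, Finset.mul_sum]
  congr 1
  refine Finset.sum_congr rfl fun μ hμ => ?_
  have hne : (finrank ℂ (T.maxGenEigenspace μ) : ℂ) ≠ 0 := by
    have : T.maxGenEigenspace μ ≠ ⊥ := by simpa using hμ
    rw [← Submodule.one_le_finrank_iff] at this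
    exact_mod_cast (by omega : finrank ℂ (T.maxGenEigenspace μ) ≠ 0)
  have := hTr μ
  field_simp
  linear_combination (k μ : ℂ) * this
end lemma2
end TZ


set_option linter.unusedSectionVars false
namespace TZ
open LinearMap Module

section avgsec
variable {V : Type*} [AddCommGroup V] [Module ℂ V]
variable {G : Type*} [Group G] [Finite G]

/-- averaging operator over a subgroup -/
noncomputable def avg (σ : G →* End ℂ V) (S : Subgroup G) : End ℂ V :=
  (Nat.card S : ℂ)⁻¹ • ∑ g ∈ (Set.toFinite (S : Set G)).toFinset, σ g

lemma avg_param (σ : G →* End ℂ V) (S : Subgroup G) {A : Type*} [Fintype A] (t : A → G)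
    (ht : Function.Injective t) (hm : ∀ g, g ∈ S ↔ ∃ a, t a = g) :
    avg σ S = (Fintype.card A : ℂ)⁻¹ • ∑ a, σ (t a) := by
  classical
  unfold avg
  have h1 : (Set.toFinite (S : Set G)).toFinset = Finset.univ.image t := by
    ext g; simp [hm]
  have h2 : Nat.card S = Fintype.card A := by
    have : Nat.card S = (Set.toFinite (S : Set G)).toFinset.card := by
      rw [← Set.ncard_eq_toFinset_card]; rfl
    rw [this, h1, Finset.card_image_of_injective _ ht, Finset.card_univ]
  rw [h1, h2, Finset.sum_image (fun a _ b _ h => ht h)]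

lemma avg_eq (σ : G →* End ℂ V) (S : Subgroup G) [Fintype S] :
    avg σ S = (Fintype.card S : ℂ)⁻¹ • ∑ a : S, σ a :=
  avg_param σ S (fun a : S => (a : G)) Subtype.val_injective (fun g => by simp)

lemma mul_avg (σ : G →* End ℂ V) (S : Subgroup G) {g : G} (hg : g ∈ S) :
    σ g * avg σ S = avg σ S := by
  have := Fintype.ofFinite S
  rw [avg_eq, mul_smul_comm, Finset.mul_sum]
  congr 1
  simp_rw [← map_mul]
  exact Fintype.sum_equiv (Equiv.mulLeft (⟨g, hg⟩ : S)) _ _ (fun a => rfl)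

lemma avg_mul (σ : G →* End ℂ V) (S : Subgroup G) {g : G} (hg : g ∈ S) :
    avg σ S * σ g = avg σ S := by
  have := Fintype.ofFinite S
  rw [avg_eq, smul_mul_assoc, Finset.sum_mul]
  congr 1
  simp_rw [← map_mul]
  exact Fintype.sum_equiv (Equiv.mulRight (⟨g, hg⟩ : S)) _ _ (fun a => rfl)

lemma avg_absorb (σ : G →* End ℂ V) (S : Subgroup G) (e : End ℂ V)
    (h : ∀ g ∈ S, σ g * e = e) : avg σ S * e = e := by
  have := Fintype.ofFinite S
  rw [avg_eq, smul_mul_assoc, Finset.sum_mul]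
  simp_rw [fun a : S => h a a.2]
  rw [Finset.sum_const, Finset.card_univ, ← Nat.cast_smul_eq_nsmul ℂ, smul_smul,
    inv_mul_cancel₀ (by exact_mod_cast Fintype.card_ne_zero), one_smul]

lemma avg_idem (σ : G →* End ℂ V) (S : Subgroup G) : avg σ S * avg σ S = avg σ S :=
  avg_absorb σ S _ (fun _ hg => mul_avg σ S hg)

lemma avg_commute (σ : G →* End ℂ V) (S : Subgroup G) (a : End ℂ V)
    (h : ∀ g ∈ S, Commute a (σ g)) : Commute a (avg σ S) := by
  unfold avg
  refine Commute.smul_right (Commute.sum_right _ _ _ ?_) _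
  intro g hg
  exact h g (by simpa using hg)

lemma avg_conj (σ : G →* End ℂ V) (S S' : Subgroup G) (g : G)
    (h : ∀ s, s ∈ S' ↔ g⁻¹ * s * g ∈ S) : σ g * avg σ S = avg σ S' * σ g := by
  have := Fintype.ofFinite S
  rw [avg_eq σ S, avg_param σ S' (fun a : S => g * a * g⁻¹)
    (fun a b hab => by simpa using hab) ?_, mul_smul_comm, smul_mul_assoc, Finset.mul_sum, Finset.sum_mul]
  · simp_rw [← map_mul]; simp
  · intro s
    rw [h]
    constructor
    · intro hs; exact ⟨⟨_, hs⟩, by simp [mul_assoc]⟩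
    · rintro ⟨a, rfl⟩; simp [mul_assoc]

lemma trace_conj (σ : G →* End ℂ V) (g : G) (a b : End ℂ V) (h : σ g * a = b * σ g) :
    trace ℂ V a = trace ℂ V b := by
  have e1 : σ g⁻¹ * σ g = 1 := by rw [← map_mul]; simp
  have e2 : σ g * σ g⁻¹ = 1 := by rw [← map_mul]; simp
  calc trace ℂ V a = trace ℂ V (σ g⁻¹ * (σ g * a)) := by rw [← mul_assoc, e1, one_mul]
    _ = trace ℂ V (b * σ g * σ g⁻¹) := by rw [h, trace_mul_comm]
    _ = _ := by rw [mul_assoc, e2, mul_one]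

/-- irreducibility -/
def Irr (σ : G →* End ℂ V) : Prop :=
  ∀ W : Submodule ℂ V, (∀ g, ∀ v ∈ W, σ g v ∈ W) → W = ⊥ ∨ W = ⊤

variable [FiniteDimensional ℂ V]

lemma schur [Nontrivial V] (σ : G →* End ℂ V) (hσ : Irr σ) (T : End ℂ V)
    (hT : ∀ g, Commute T (σ g)) : ∃ c : ℂ, T = c • 1 := by
  obtain ⟨c, hc⟩ := Module.End.exists_eigenvalue T
  refine ⟨c, ?_⟩
  have key := hσ (T.eigenspace c) (fun g v hv =>
    Module.End.mapsTo_genEigenspace_of_comm (hT g) c 1 hv)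
  rcases key with h | h
  · exact absurd h hc
  · ext v
    have : v ∈ T.eigenspace c := by rw [h]; trivial
    simpa [Module.End.mem_eigenspace_iff] using this

lemma lemma1 {X : Type*} [Fintype X] [MulAction G X]
    (σ : G →* End ℂ V) (hσ : Irr σ) (e : X → End ℂ V)
    (hid : ∀ x, e x * e x = e x)
    (hc : ∀ g x, σ g * e x = e (g • x) * σ g)
    (x0 : X) (d s : ℂ) (hd : ∀ x, trace ℂ V (e x) = d)
    (hs : ∀ y, y ≠ x0 → trace ℂ V (e x0 * e y) = s) :
    (finrank ℂ V : ℂ) * (d + ((Fintype.card X : ℂ) - 1) * s) = Fintype.card X * d ^ 2 := by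
  classical
  rcases subsingleton_or_nontrivial V with hV | hV
  · have : d = 0 := by
      rw [← hd x0, Subsingleton.elim (e x0) 0, map_zero]
    simp [this, finrank_zero_of_subsingleton]
  obtain ⟨c, hT⟩ := schur σ hσ (∑ x, e x) (fun g => by
    unfold Commute SemiconjBy
    rw [Finset.mul_sum, Finset.sum_mul]
    simp_rw [hc]
    exact (Fintype.sum_equiv (MulAction.toPerm g) _ _ (fun a => rfl)).symm)
  have h1 : c * finrank ℂ V = Fintype.card X * d := by
    have := congrArg (trace ℂ V) hT
    rw [map_sum, map_smul, LinearMap.trace_one] at this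
    simp_rw [hd] at this
    simpa using this.symm
  have h2 : c * d = d + ((Fintype.card X : ℂ) - 1) * s := by
    have := congrArg (fun t => trace ℂ V (e x0 * t)) hT
    simp only [mul_smul_comm, mul_one, map_smul, hd, smul_eq_mul] at this
    rw [← this, Finset.mul_sum, map_sum, ← Finset.add_sum_erase _ _ (Finset.mem_univ x0), hid, hd]
    rw [Finset.sum_congr rfl (fun y hy => hs y (Finset.ne_of_mem_erase hy))]
    rw [Finset.sum_const, Finset.card_erase_of_mem (Finset.mem_univ _), nsmul_eq_mul, Finset.card_univ]
    have : 0 < Fintype.card X := Fintype.card_pos_iff.2 ⟨x0⟩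
    push_cast [Nat.cast_sub (show 1 ≤ Fintype.card X from this)]
    rfl
  rw [← h2]
  linear_combination d * h1

end avgsec
end TZ


set_option linter.unusedSectionVars false
namespace TZ
open LinearMap Module

section tvsec
variable {ι F : Type*} [Fintype ι] [DecidableEq ι] [Field F]

lemma sl_smul (g : SpecialLinearGroup ι F) (v : ι → F) : g • v = (g : Matrix ι ι F) *ᵥ v := rfl

lemma sl_ext {g h : SpecialLinearGroup ι F} (H : ∀ v : ι → F, g • v = h • v) : g = h := by
  apply Subtype.ext
  apply Matrix.ext_of_mulVec_single
  intro i
  exact H _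

open Classical in
/-- transvection `v ↦ v + φ(v) x` (only meaningful if `φ(x) = 0`) -/
noncomputable def tv (x φ : ι → F) : SpecialLinearGroup ι F :=
  if h : φ ⬝ᵥ x = 0 then ⟨1 + vecMulVec x φ, by
    rw [vecMulVec_eq Unit, det_one_add_replicateCol_mul_replicateRow, h, add_zero]⟩ else 1

lemma tv_smul {x φ : ι → F} (h : φ ⬝ᵥ x = 0) (v : ι → F) : tv x φ • v = v + (φ ⬝ᵥ v) • x := by
  have : (tv x φ : Matrix ι ι F) = 1 + vecMulVec x φ := by
    simp [tv, h]
  rw [sl_smul, this]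
  simp [add_mulVec, vecMulVec_mulVec]

lemma tv_zero (x : ι → F) : tv x (0 : ι → F) = 1 := by
  apply sl_ext; intro v; rw [tv_smul (by simp)]; simp

lemma tv_mul {x φ ψ : ι → F} (h : φ ⬝ᵥ x = 0) (h' : ψ ⬝ᵥ x = 0) :
    tv x φ * tv x ψ = tv x (φ + ψ) := by
  apply sl_ext; intro v
  rw [mul_smul, tv_smul h, tv_smul h', tv_smul (by simp [h, h']), dotProduct_add, add_dotProduct,
    dotProduct_smul, h]
  simp [add_smul]; abel

lemma tv_inv {x φ : ι → F} (h : φ ⬝ᵥ x = 0) : (tv x φ)⁻¹ = tv x (-φ) := by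
  rw [inv_eq_iff_mul_eq_one, tv_mul h (by simp [h]), add_neg_cancel, tv_zero]

lemma tv_conj (g : SpecialLinearGroup ι F) {x φ ψ : ι → F} (h : φ ⬝ᵥ x = 0)
    (hψ : ∀ v : ι → F, ψ ⬝ᵥ (g • v) = φ ⬝ᵥ v) : g * tv x φ = tv (g • x) ψ * g := by
  apply sl_ext; intro v
  rw [mul_smul, mul_smul, tv_smul h, tv_smul (by rw [hψ, h]), hψ, smul_add, smul_comm]

lemma tv_smul_smul (x φ : ι → F) {c : F} (h : φ ⬝ᵥ x = 0) :
    tv (c • x) φ = tv x (c • φ) := by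
  apply sl_ext; intro v
  rw [tv_smul (by simp [h]), tv_smul (by simp [h]), smul_dotProduct, smul_smul, smul_eq_mul, mul_comm]

lemma tv_injective {x : ι → F} (hx : x ≠ 0) {φ ψ : ι → F} (h : φ ⬝ᵥ x = 0) (h' : ψ ⬝ᵥ x = 0)
    (e : tv x φ = tv x ψ) : φ = ψ := by
  ext i
  have := congrArg (fun g => g • (Pi.single i 1 : ι → F)) e
  simp only [tv_smul h, tv_smul h', add_right_inj, dotProduct_single, mul_one] at this
  exact smul_left_injective F hx this

/-- the subgroup acting trivially on `D` and on `V/D` -/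
def US (D : Submodule F (ι → F)) : Subgroup (SpecialLinearGroup ι F) where
  carrier := {g | (∀ v : ι → F, g • v - v ∈ D) ∧ ∀ v ∈ D, g • v = v}
  one_mem' := by simp
  mul_mem' := by
    rintro a b ⟨ha, ha'⟩ ⟨hb, hb'⟩
    refine ⟨fun v => ?_, fun v hv => by rw [mul_smul, hb' v hv, ha' v hv]⟩
    rw [mul_smul, ← sub_add_sub_cancel (a • b • v) (b • v) v]
    exact D.add_mem (ha _) (hb _)
  inv_mem' := by
    rintro a ⟨ha, ha'⟩
    refine ⟨fun v => ?_, fun v hv => by rw [inv_smul_eq_iff, ha' v hv]⟩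
    have := ha (a⁻¹ • v)
    rw [smul_inv_smul] at this
    rw [← neg_sub]; exact D.neg_mem this

lemma mem_US {D : Submodule F (ι → F)} {g : SpecialLinearGroup ι F} :
    g ∈ US D ↔ (∀ v : ι → F, g • v - v ∈ D) ∧ ∀ v ∈ D, g • v = v := Iff.rfl

lemma US_conj (g : SpecialLinearGroup ι F) {D D' : Submodule F (ι → F)}
    (h : ∀ v, v ∈ D ↔ g • v ∈ D') (s) : s ∈ US D' ↔ g⁻¹ * s * g ∈ US D := by
  rw [mem_US, mem_US]
  constructor
  · rintro ⟨h1, h2⟩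
    refine ⟨fun v => ?_, fun v hv => ?_⟩
    · rw [h, smul_sub, mul_smul, mul_smul, smul_inv_smul]; exact h1 _
    · rw [mul_smul, mul_smul, h2 _ ((h v).1 hv), inv_smul_smul]
  · rintro ⟨h1, h2⟩
    refine ⟨fun v => ?_, fun v hv => ?_⟩
    · have := h1 (g⁻¹ • v)
      rwa [h, smul_sub, mul_smul, mul_smul, smul_inv_smul, smul_inv_smul] at this
    · have := h2 (g⁻¹ • v) (by rw [h, smul_inv_smul]; exact hv)
      rwa [mul_smul, mul_smul, smul_inv_smul, inv_smul_eq_iff, smul_inv_smul] at this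

open LinearAlgebra.Projectivization in
lemma proj_smul (g : SpecialLinearGroup ι F) (x : ℙ F (ι → F)) (v : ι → F) :
    v ∈ x.submodule ↔ g • v ∈ (g • x).submodule := by
  induction x using Projectivization.ind with
  | h w hw =>
    rw [Projectivization.smul_mk, Projectivization.submodule_mk, Projectivization.submodule_mk,
      Submodule.mem_span_singleton, Submodule.mem_span_singleton]
    refine exists_congr fun c => ?_
    rw [← smul_comm g, smul_left_cancel_iff]

/-- vectors vanishing on `S` -/
def Kz (F : Type*) [Field F] (S : Finset ι) : Submodule F (ι → F) where
  carrier := {φ | ∀ i ∈ S, φ i = 0}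
  zero_mem' := by simp
  add_mem' := by
    intro a b ha hb i hi
    simp [ha i hi, hb i hi]
  smul_mem' := by
    intro c a ha i hi
    simp [ha i hi]

lemma mem_Kz {S : Finset ι} {φ : ι → F} : φ ∈ Kz F S ↔ ∀ i ∈ S, φ i = 0 := Iff.rfl

/-- coordinates -/
def KzEquiv (S : Finset ι) : Kz F S ≃ₗ[F] ({i // i ∉ S} → F) where
  toFun φ i := φ.1 i
  map_add' _ _ := rfl
  map_smul' _ _ := rfl
  invFun f := ⟨fun i => if h : i ∉ S then f ⟨i, h⟩ else 0, fun i hi => by simp [hi]⟩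
  left_inv φ := by
    ext i
    by_cases h : i ∈ S
    · simp [h, φ.2 i h]
    · simp [h]
  right_inv f := by
    ext ⟨i, hi⟩; simp [hi]

lemma card_Kz [Fintype F] (S : Finset ι) [Fintype (Kz F S)] :
    Fintype.card (Kz F S) = Fintype.card F ^ (Fintype.card ι - S.card) := by
  rw [Fintype.card_congr (KzEquiv S).toEquiv, Fintype.card_fun, Fintype.card_subtype_compl]
  simp

lemma finrank_Kz (S : Finset ι) : finrank F (Kz F S) = Fintype.card ι - S.card := by
  rw [(KzEquiv S).finrank_eq, finrank_fintype_fun_eq_card, Fintype.card_subtype_compl]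
  simp

/-- basis vector -/
abbrev ev (F : Type*) [Field F] (i : ι) : ι → F := Pi.single i 1

lemma ev_ne (i : ι) : ev F i ≠ 0 := by simp

lemma dot_ev (φ : ι → F) (i : ι) : φ ⬝ᵥ ev F i = φ i := by simp

lemma mem_US_span (i : ι) (g : SpecialLinearGroup ι F) :
    g ∈ US (F ∙ ev F i) ↔ ∃ φ : Kz F {i}, tv (ev F i) φ = g := by
  rw [mem_US]
  constructor
  · rintro ⟨h1, h2⟩
    have hφ : ((g : Matrix ι ι F) - 1) i ⬝ᵥ ev F i = 0 := by
      have := congrFun (h2 _ (Submodule.mem_span_singleton_self _)) i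
      rw [sl_smul, mulVec] at this
      simp at this
      simp [this]
    refine ⟨⟨((g : Matrix ι ι F) - 1) i, ?_⟩, ?_⟩
    · rw [mem_Kz]; simp only [Finset.mem_singleton, forall_eq]; rwa [dot_ev] at hφ
    · apply sl_ext; intro v
      rw [tv_smul hφ]
      obtain ⟨c, hc⟩ := Submodule.mem_span_singleton.1 (h1 v)
      have h3 : ((g : Matrix ι ι F) - 1) i ⬝ᵥ v = (g • v - v) i := by
        rw [sl_smul]
        have : (((g : Matrix ι ι F) - 1) *ᵥ v) i = ((g : Matrix ι ι F) *ᵥ v - v) i := by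
          rw [sub_mulVec, one_mulVec]
        exact this
      rw [h3, eq_comm, ← sub_eq_iff_eq_add', ← hc]
      simp
  · rintro ⟨φ, rfl⟩
    have hφ : (φ : ι → F) ⬝ᵥ ev F i = 0 := by rw [dot_ev]; exact φ.2 i (by simp)
    refine ⟨fun v => ?_, fun v hv => ?_⟩
    · rw [tv_smul hφ, add_sub_cancel_left]
      exact Submodule.smul_mem _ _ (Submodule.mem_span_singleton_self _)
    · rw [tv_smul hφ]
      obtain ⟨c, rfl⟩ := Submodule.mem_span_singleton.1 hv
      rw [dotProduct_smul, hφ]; simp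

lemma mem_US_pair {i j : ι} (hij : i ≠ j) (g : SpecialLinearGroup ι F) :
    g ∈ US (Kz F ({i, j}ᶜ : Finset ι)) ↔
      ∃ φ : Kz F {i, j} × Kz F {i, j}, tv (ev F i) φ.1 * tv (ev F j) φ.2 = g := by
  rw [mem_US]
  have act : ∀ (φ : Kz F {i, j} × Kz F {i, j}) (v : ι → F),
      (tv (ev F i) φ.1 * tv (ev F j) φ.2) • v =
        v + ((φ.1 : ι → F) ⬝ᵥ v) • ev F i + ((φ.2 : ι → F) ⬝ᵥ v) • ev F j := by
    intro φ v
    have h1 : (φ.1 : ι → F) ⬝ᵥ ev F i = 0 := by rw [dot_ev]; exact φ.1.2 i (by simp)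
    have h2 : (φ.1 : ι → F) ⬝ᵥ ev F j = 0 := by rw [dot_ev]; exact φ.1.2 j (by simp)
    have h3 : (φ.2 : ι → F) ⬝ᵥ ev F j = 0 := by rw [dot_ev]; exact φ.2.2 j (by simp)
    rw [mul_smul, tv_smul h1, tv_smul h3, dotProduct_add, dotProduct_smul, h2]
    simp; abel
  constructor
  · rintro ⟨h1, h2⟩
    have hφ : ∀ a b, a ∈ ({i, j} : Finset ι) → b ∈ ({i, j} : Finset ι) →
        ((g : Matrix ι ι F) - 1) a b = 0 := by
      intro a b ha hb
      have := congrFun (h2 (ev F b) (by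
        rw [mem_Kz]; intro k hk
        rw [Finset.mem_compl] at hk
        exact Pi.single_eq_of_ne (by rintro rfl; exact hk hb) _)) a
      rw [sl_smul, mulVec] at this
      simp at this
      rw [Matrix.sub_apply, this, Matrix.one_apply, ev, Pi.single_apply, sub_self]
    refine ⟨⟨⟨((g : Matrix ι ι F) - 1) i, fun b hb => hφ _ _ (by simp) hb⟩,
      ⟨((g : Matrix ι ι F) - 1) j, fun b hb => hφ _ _ (by simp) hb⟩⟩, ?_⟩
    apply sl_ext; intro v
    rw [act]
    have h3 : ∀ k, ((g : Matrix ι ι F) - 1) k ⬝ᵥ v = (g • v - v) k := by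
      intro k
      rw [sl_smul]
      have : (((g : Matrix ι ι F) - 1) *ᵥ v) k = ((g : Matrix ι ι F) *ᵥ v - v) k := by
        rw [sub_mulVec, one_mulVec]
      exact this
    simp only [h3]
    rw [add_assoc, eq_comm, ← sub_eq_iff_eq_add']
    ext k
    by_cases hki : k = i
    · subst hki; simp [hij]
    · by_cases hkj : k = j
      · subst hkj; simp [hki]
      · have := h1 v k (by simp [hki, hkj])
        rw [this]; simp [hki, hkj]
  · rintro ⟨φ, rfl⟩
    refine ⟨fun v => ?_, fun v hv => ?_⟩
    · rw [act, add_assoc, add_sub_cancel_left, mem_Kz]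
      intro k hk
      simp at hk
      simp [hk]
    · rw [act]
      have : ∀ ψ : Kz F {i, j}, (ψ : ι → F) ⬝ᵥ v = 0 := by
        intro ψ
        refine Finset.sum_eq_zero fun k _ => ?_
        by_cases hk : k ∈ ({i, j} : Finset ι)
        · rw [ψ.2 k hk, zero_mul]
        · rw [hv k (by rwa [Finset.mem_compl]), mul_zero]
      rw [this, this]; simp

lemma pair_injective {i j : ι} (hij : i ≠ j) :
    Function.Injective (fun φ : Kz F {i, j} × Kz F {i, j} =>
      tv (ev F i) φ.1 * tv (ev F j) φ.2) := by
  rintro ⟨⟨a, ha⟩, ⟨b, hb⟩⟩ ⟨⟨c, hc⟩, ⟨d, hd⟩⟩ h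
  simp only at h
  have h1 : ∀ {a : ι → F}, a ∈ Kz F {i, j} → a ⬝ᵥ ev F i = 0 := by
    intro a ha; rw [dot_ev]; exact ha i (by simp)
  have h2 : ∀ {a : ι → F}, a ∈ Kz F {i, j} → a ⬝ᵥ ev F j = 0 := by
    intro a ha; rw [dot_ev]; exact ha j (by simp)
  have key : ∀ k, a k = c k ∧ b k = d k := by
    intro k
    have := congrArg (fun g => g • (ev F k)) h
    simp only [mul_smul, tv_smul (h1 ha), tv_smul (h1 hc), tv_smul (h2 hb), tv_smul (h2 hd),
      dotProduct_add, dotProduct_smul, h2 ha, h2 hc, dot_ev] at this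
    have e1 := congrFun this i
    have e2 := congrFun this j
    simp [hij, hij.symm] at e1 e2
    exact ⟨e1, e2⟩
  have e1 : a = c := funext fun k => (key k).1
  have e2 : b = d := funext fun k => (key k).2
  subst e1 e2; rfl

end tvsec
end TZ


set_option linter.unusedSectionVars false
namespace TZ
open LinearMap Module
open scoped LinearAlgebra.Projectivization

section applyLemmas
variable {ι F : Type*} [Fintype ι] [DecidableEq ι] [Field F] [Fintype F]
variable {V : Type*} [AddCommGroup V] [Module ℂ V] [FiniteDimensional ℂ V]

instance : Finite (SpecialLinearGroup ι F) := by
  classical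
  exact Subtype.finite

/-- averaging over `A_x` -/
noncomputable def eX (σ : SpecialLinearGroup ι F →* End ℂ V) (x : ℙ F (ι → F)) : End ℂ V :=
  avg σ (US x.submodule)

/-- basis point -/
noncomputable def pt (F : Type*) [Field F] (i : ι) : ℙ F (ι → F) :=
  Projectivization.mk F (ev F i) (ev_ne i)

/-- coordinate plane -/
abbrev Dp (F : Type*) [Field F] (i j : ι) : Submodule F (ι → F) := Kz F ({i, j}ᶜ : Finset ι)

/-- averaging over `U` -/
noncomputable def eU (σ : SpecialLinearGroup ι F →* End ℂ V) (i j : ι) : End ℂ V :=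
  avg σ (US (Dp F i j))

lemma eX_conj (σ : SpecialLinearGroup ι F →* End ℂ V) (g) (x : ℙ F (ι → F)) :
    σ g * eX σ x = eX σ (g • x) * σ g :=
  avg_conj σ _ _ g (US_conj g (proj_smul g x))

lemma pt_ne {i j : ι} (hij : i ≠ j) : pt F i ≠ pt F j := by
  intro h
  have := congrArg Projectivization.submodule h
  rw [pt, pt, Projectivization.submodule_mk, Projectivization.submodule_mk] at this
  have h2 : ev F i ∈ F ∙ ev F j := this ▸ Submodule.mem_span_singleton_self _
  obtain ⟨c, hc⟩ := Submodule.mem_span_singleton.1 h2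
  have := congrFun hc i
  simp [hij] at this

lemma two_trans {a b c d : ℙ F (ι → F)} (h : a ≠ b) (h' : c ≠ d) :
    ∃ g : SpecialLinearGroup ι F, g • a = c ∧ g • b = d :=
  MulAction.is_two_pretransitive_iff.1 inferInstance h h'

lemma trace_eX (σ : SpecialLinearGroup ι F →* End ℂ V) {i j : ι} (hij : i ≠ j) (x : ℙ F (ι → F)) :
    trace ℂ V (eX σ x) = trace ℂ V (eX σ (pt F i)) := by
  obtain ⟨y, hy⟩ : ∃ y, x ≠ y := by
    by_cases h : x = pt F i
    · exact ⟨pt F j, by rw [h]; exact pt_ne hij⟩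
    · exact ⟨_, h⟩
  obtain ⟨g, hg, -⟩ := two_trans (pt_ne (F := F) hij) hy
  have := trace_conj σ g _ _ (eX_conj σ g (pt F i))
  rw [hg] at this; exact this.symm

theorem apply1 (σ : SpecialLinearGroup ι F →* End ℂ V) (hσ : Irr σ) {i j : ι} (hij : i ≠ j) :
    (finrank ℂ V : ℂ) * (trace ℂ V (eX σ (pt F i)) + ((Nat.card (ℙ F (ι → F)) : ℂ) - 1) *
      trace ℂ V (eX σ (pt F i) * eX σ (pt F j))) =
      Nat.card (ℙ F (ι → F)) * trace ℂ V (eX σ (pt F i)) ^ 2 := by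
  have := Fintype.ofFinite (ℙ F (ι → F))
  rw [Nat.card_eq_fintype_card]
  refine lemma1 σ hσ (eX σ) (fun x => avg_idem _ _) (eX_conj σ) (pt F i) _ _ (trace_eX σ hij) ?_
  intro y hy
  obtain ⟨g, hg, hg'⟩ := two_trans (pt_ne (F := F) hij) hy.symm
  symm
  apply trace_conj σ g
  rw [← mul_assoc, eX_conj, mul_assoc, eX_conj, hg, hg', mul_assoc]

lemma stab_inv {D : Submodule F (ι → F)} (g : SpecialLinearGroup ι F) (h : ∀ v ∈ D, g • v ∈ D)
    (v : ι → F) : v ∈ D ↔ g • v ∈ D := by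
  refine ⟨h v, fun hv => ?_⟩
  have hk : ∀ k : ℕ, ∀ v ∈ D, (g ^ k) • v ∈ D := by
    intro k
    induction k with
    | zero => intro v hv; simpa using hv
    | succ k ih => intro v hv; rw [pow_succ', mul_smul]; exact h _ (ih v hv)
  have e : v = (g ^ (orderOf g - 1)) • (g • v) := by
    rw [← mul_smul, ← pow_succ, Nat.sub_add_cancel (orderOf_pos g), pow_orderOf_eq_one, one_smul]
  rw [e]; exact hk _ _ hv

lemma pt_le_Dp {i j : ι} : (pt F i).submodule ≤ Dp F i j ∧ (pt F j).submodule ≤ Dp F i j := by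
  constructor
  all_goals
    rw [pt, Projectivization.submodule_mk, Submodule.span_singleton_le_iff_mem, mem_Kz]
    intro k hk
    simp at hk
    simp [hk]

lemma Dp_decomp {i j : ι} (hij : i ≠ j) {v : ι → F} (hv : v ∈ Dp F i j) :
    v = v i • ev F i + v j • ev F j := by
  ext k
  by_cases hki : k = i
  · subst hki; simp [hij]
  · by_cases hkj : k = j
    · subst hkj; simp [hki]
    · rw [hv k (by simp [hki, hkj])]; simp [hki, hkj]

lemma stab_of_pts {i j : ι} (hij : i ≠ j) (g : SpecialLinearGroup ι F)
    (h1 : (g • pt F i : ℙ F (ι → F)).submodule ≤ Dp F i j) (h2 : (g • pt F j : ℙ F (ι → F)).submodule ≤ Dp F i j) (v : ι → F) :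
    v ∈ Dp F i j ↔ g • v ∈ Dp F i j := by
  refine stab_inv g ?_ v
  intro v hv
  have key : ∀ k : ι, g • ev F k ∈ (g • pt F k).submodule := by
    intro k
    rw [← proj_smul, pt, Projectivization.submodule_mk]
    exact Submodule.mem_span_singleton_self _
  rw [Dp_decomp hij hv, smul_add, smul_comm, smul_comm g]
  exact Submodule.add_mem _ (Submodule.smul_mem _ _ (h1 (key i)))
    (Submodule.smul_mem _ _ (h2 (key j)))

lemma stab_proj {D : Submodule F (ι → F)} (g : SpecialLinearGroup ι F)
    (h : ∀ v, v ∈ D ↔ g • v ∈ D) (x : ℙ F (ι → F)) :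
    x.submodule ≤ D ↔ (g • x).submodule ≤ D := by
  constructor
  · intro hx w hw
    have : g⁻¹ • w ∈ x.submodule := by rw [proj_smul g, smul_inv_smul]; exact hw
    have := (h _).1 (hx this)
    rwa [smul_inv_smul] at this
  · intro hx w hw
    exact (h w).2 (hx ((proj_smul g x w).1 hw))

lemma card_Y {i j : ι} (hij : i ≠ j) :
    Nat.card {x : ℙ F (ι → F) // x.submodule ≤ Dp F i j} = Fintype.card F + 1 := by
  have h2 : finrank F (Dp F i j) = 2 := by
    rw [finrank_Kz, Finset.card_compl, Finset.card_pair hij]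
    have : 2 ≤ Fintype.card ι := by
      rw [← Finset.card_pair hij]; exact Finset.card_le_univ _
    omega
  have := Projectivization.card_of_finrank_two F (Dp F i j) h2
  rw [Nat.card_eq_fintype_card (α := F)] at this
  rw [← this]
  symm
  refine Nat.card_congr (Equiv.ofBijective (fun y =>
    ⟨Projectivization.map (Dp F i j).subtype (Submodule.subtype_injective _) y, ?_⟩) ⟨?_, ?_⟩)
  · induction y using Projectivization.ind with
    | h w hw =>
      rw [Projectivization.map_mk, Projectivization.submodule_mk, Submodule.span_singleton_le_iff_mem]
      exact w.2
  · intro a b hab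
    exact Projectivization.map_injective _ (Submodule.subtype_injective _) (Subtype.ext_iff.1 hab)
  · rintro ⟨x, hx⟩
    induction x using Projectivization.ind with
    | h w hw =>
      rw [Projectivization.submodule_mk, Submodule.span_singleton_le_iff_mem] at hx
      refine ⟨Projectivization.mk F ⟨w, hx⟩ (by simpa [Subtype.ext_iff] using hw), ?_⟩
      simp [Projectivization.map_mk]

lemma eU_conj (σ : SpecialLinearGroup ι F →* End ℂ V) {i j : ι} (g : SpecialLinearGroup ι F)
    (h : ∀ v, v ∈ Dp F i j ↔ g • v ∈ Dp F i j) : σ g * eU σ i j = eU σ i j * σ g :=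
  avg_conj σ _ _ g (US_conj g h)

lemma stab_of_mem_US {x : ℙ F (ι → F)} {D : Submodule F (ι → F)} (hx : x.submodule ≤ D)
    {g : SpecialLinearGroup ι F} (hg : g ∈ US x.submodule) (v : ι → F) : v ∈ D ↔ g • v ∈ D := by
  refine stab_inv g ?_ v
  intro v hv
  have := D.add_mem (hx (hg.1 v)) hv
  simpa using this

lemma eX_eU_comm (σ : SpecialLinearGroup ι F →* End ℂ V) {i j : ι} {x : ℙ F (ι → F)}
    (hx : x.submodule ≤ Dp F i j) : Commute (eU σ i j) (eX σ x) := by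
  apply avg_commute
  intro g hg
  exact (eU_conj σ g (stab_of_mem_US hx hg)).symm

lemma pt_submodule (i : ι) : (pt F i).submodule = F ∙ ev F i := by
  rw [pt, Projectivization.submodule_mk]

lemma tv_mem_US_pt (i : ι) {φ : ι → F} (h : φ ∈ Kz F {i}) :
    tv (ev F i) φ ∈ US (pt F i).submodule := by
  rw [pt_submodule, mem_US_span]; exact ⟨⟨φ, h⟩, rfl⟩

lemma Kz_pair_left {i j : ι} {φ : ι → F} (h : φ ∈ Kz F {i, j}) : φ ∈ Kz F {i} := by
  intro k hk; exact h k (by simp at hk; simp [hk])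

lemma Kz_pair_right {i j : ι} {φ : ι → F} (h : φ ∈ Kz F {i, j}) : φ ∈ Kz F {j} := by
  intro k hk; exact h k (by simp at hk; simp [hk])

lemma eU_param (σ : SpecialLinearGroup ι F →* End ℂ V) {i j : ι} (hij : i ≠ j)
    [Fintype (Kz F ({i, j} : Finset ι))] :
    eU σ i j = (Fintype.card (Kz F ({i, j} : Finset ι) × Kz F ({i, j} : Finset ι)) : ℂ)⁻¹ •
      ∑ φ : Kz F ({i, j} : Finset ι) × Kz F ({i, j} : Finset ι),
        σ (tv (ev F i) φ.1) * σ (tv (ev F j) φ.2) := by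
  simp_rw [← map_mul]
  exact avg_param σ _ _ (pair_injective hij) (mem_US_pair hij)

lemma eX_eU_eX (σ : SpecialLinearGroup ι F →* End ℂ V) {i j : ι} (hij : i ≠ j) :
    eX σ (pt F i) * eU σ i j * eX σ (pt F j) = eX σ (pt F i) * eX σ (pt F j) := by
  have := Fintype.ofFinite (Kz F ({i, j} : Finset ι))
  rw [eU_param σ hij, mul_smul_comm, smul_mul_assoc, Finset.mul_sum, Finset.sum_mul]
  have : ∀ φ : Kz F ({i, j} : Finset ι) × Kz F ({i, j} : Finset ι),
      eX σ (pt F i) * (σ (tv (ev F i) φ.1) * σ (tv (ev F j) φ.2)) * eX σ (pt F j) =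
        eX σ (pt F i) * eX σ (pt F j) := by
    intro φ
    rw [← mul_assoc, eX, eX, avg_mul σ _ (tv_mem_US_pt i (Kz_pair_left φ.1.2)), mul_assoc,
      mul_avg σ _ (tv_mem_US_pt j (Kz_pair_right φ.2.2))]
  simp_rw [this]
  rw [Finset.sum_const, Finset.card_univ, ← Nat.cast_smul_eq_nsmul ℂ, smul_smul,
    inv_mul_cancel₀ (by exact_mod_cast Fintype.card_ne_zero), one_smul]

theorem apply2 (σ : SpecialLinearGroup ι F →* End ℂ V) {i j : ι} (hij : i ≠ j) :
    ∃ Δ : ℝ, (Δ = 0 ∨ 1/2 ≤ Δ) ∧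
      (Fintype.card F : ℂ) * (trace ℂ V (eX σ (pt F i) * eU σ i j) -
        trace ℂ V (eX σ (pt F i) * eX σ (pt F j))) = ((Fintype.card F : ℂ) + 1) * (Δ : ℂ) := by
  classical
  have := Fintype.ofFinite {x : ℙ F (ι → F) // x.submodule ≤ Dp F i j}
  have hcard : Fintype.card {x : ℙ F (ι → F) // x.submodule ≤ Dp F i j} = Fintype.card F + 1 := by
    rw [← Nat.card_eq_fintype_card, card_Y hij]
  set f : {x : ℙ F (ι → F) // x.submodule ≤ Dp F i j} → End ℂ V :=
    fun x => eX σ x * eU σ i j with hf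
  have fconj : ∀ (g : SpecialLinearGroup ι F) (h : ∀ v, v ∈ Dp F i j ↔ g • v ∈ Dp F i j) x,
      σ g * f x = f ⟨g • x.1, (stab_proj g h x.1).1 x.2⟩ * σ g := by
    intro g h x
    rw [hf]; dsimp only
    rw [← mul_assoc, eX_conj, mul_assoc, eU_conj σ g h, mul_assoc]
  have Tcomm : ∀ (g : SpecialLinearGroup ι F) (_ : ∀ v, v ∈ Dp F i j ↔ g • v ∈ Dp F i j),
      Commute (∑ z, f z) (σ g) := by
    intro g h
    unfold Commute SemiconjBy
    rw [Finset.mul_sum, Finset.sum_mul]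
    simp_rw [fconj g h]
    symm
    exact Fintype.sum_equiv (Equiv.subtypeEquiv (MulAction.toPerm g) (stab_proj g h)) _ _
      (fun a => rfl)
  have TU : Commute (∑ z, f z) (eU σ i j) := by
    apply avg_commute
    intro g hg
    refine Tcomm g (stab_inv g ?_)
    intro v hv; rw [hg.2 v hv]; exact hv
  have TX : ∀ x : {x : ℙ F (ι → F) // x.submodule ≤ Dp F i j}, Commute (∑ z, f z) (eX σ x) := by
    intro x
    apply avg_commute
    intro g hg
    exact Tcomm g (stab_of_mem_US x.2 hg)
  have tr : ∀ x y : {x : ℙ F (ι → F) // x.submodule ≤ Dp F i j}, x ≠ y →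
      ∃ g : SpecialLinearGroup ι F, (∀ v, v ∈ Dp F i j ↔ g • v ∈ Dp F i j) ∧ g • pt F i = x ∧
        g • pt F j = y := by
    intro x y hxy
    obtain ⟨g, hg1, hg2⟩ := two_trans (pt_ne (F := F) hij) (fun h => hxy (Subtype.ext h))
    exact ⟨g, stab_of_pts hij g (hg1 ▸ x.2) (hg2 ▸ y.2), hg1, hg2⟩
  set P0 : {x : ℙ F (ι → F) // x.submodule ≤ Dp F i j} := ⟨pt F i, pt_le_Dp.1⟩ with hP0
  set P1 : {x : ℙ F (ι → F) // x.submodule ≤ Dp F i j} := ⟨pt F j, pt_le_Dp.2⟩ with hP1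
  have hP : P0 ≠ P1 := fun h => pt_ne hij (Subtype.ext_iff.1 h)
  have tr1 : ∀ x : {x : ℙ F (ι → F) // x.submodule ≤ Dp F i j},
      ∃ g : SpecialLinearGroup ι F, (∀ v, v ∈ Dp F i j ↔ g • v ∈ Dp F i j) ∧ g • pt F i = x := by
    intro x
    by_cases h : x = P0
    · obtain ⟨g, h1, h2, -⟩ := tr x P1 (by rw [h]; exact hP)
      exact ⟨g, h1, h2⟩
    · obtain ⟨g, h1, h2, -⟩ := tr x P0 h
      exact ⟨g, h1, h2⟩
  have inv1 : ∀ g : SpecialLinearGroup ι F, σ g⁻¹ * σ g = 1 ∧ σ g * σ g⁻¹ = 1 := by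
    intro g; constructor <;> (rw [← map_mul]; simp)
  have stinv : ∀ g : SpecialLinearGroup ι F, (∀ v, v ∈ Dp F i j ↔ g • v ∈ Dp F i j) →
      (∀ v, v ∈ Dp F i j ↔ g⁻¹ • v ∈ Dp F i j) := by
    intro g h v
    rw [h (g⁻¹ • v), smul_inv_smul]
  have main := lemma2 f ?_ ?_ ?_ P0 (trace ℂ V (eX σ (pt F i) * eU σ i j))
    (trace ℂ V (eX σ (pt F i) * eX σ (pt F j))) rfl ?_
  · rw [hcard] at main
    push_cast at main
    simpa using main
  · intro x
    have c := eX_eU_comm σ x.2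
    calc f x * f x = eX σ x * (eU σ i j * eX σ x) * eU σ i j := by simp only [hf, mul_assoc]
      _ = (eX σ x * eX σ x) * (eU σ i j * eU σ i j) := by rw [c.eq]; simp only [mul_assoc]
      _ = f x := by simp only [hf]; rw [eX, avg_idem, eU, avg_idem]
  · intro x; exact (TX x).mul_right TU
  · intro x y
    obtain ⟨g, hg, hgx⟩ := tr1 x
    obtain ⟨h, hh, hhy⟩ := tr1 y
    have hst : ∀ v, v ∈ Dp F i j ↔ (g * h⁻¹) • v ∈ Dp F i j := by
      intro v; rw [mul_smul, ← hg, ← stinv h hh]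
    refine ⟨σ (g * h⁻¹), σ (g * h⁻¹)⁻¹, (inv1 _).1, Tcomm _ hst, Tcomm _ (stinv _ hst), ?_,
      (inv1 _).2⟩
    rw [fconj _ hst]
    congr 2
    apply Subtype.ext
    simp only [mul_smul]
    rw [← hhy, inv_smul_smul, hgx]
  · intro y hy
    obtain ⟨g, hg, hg1, hg2⟩ := tr P0 y hy.symm
    have e1 : trace ℂ V (f P0 * f y) = trace ℂ V (f P0 * f P1) := by
      symm
      apply trace_conj σ g
      rw [← mul_assoc, fconj g hg, mul_assoc, fconj g hg]
      have a1 : (⟨g • P0.1, (stab_proj g hg P0.1).1 P0.2⟩ :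
        {x : ℙ F (ι → F) // x.submodule ≤ Dp F i j}) = P0 := Subtype.ext hg1
      have a2 : (⟨g • P1.1, (stab_proj g hg P1.1).1 P1.2⟩ :
        {x : ℙ F (ι → F) // x.submodule ≤ Dp F i j}) = y := Subtype.ext hg2
      rw [a1, a2]
      exact (mul_assoc _ _ _).symm
    rw [e1]
    have c := eX_eU_comm σ P1.2
    have : f P0 * f P1 = eX σ (pt F i) * eX σ (pt F j) := by
      calc f P0 * f P1 = eX σ (pt F i) * eU σ i j * (eX σ (pt F j) * eU σ i j) := rfl
        _ = eX σ (pt F i) * (eU σ i j * eU σ i j) * eX σ (pt F j) := by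
          rw [← c.eq]; simp only [mul_assoc, hP1]
        _ = eX σ (pt F i) * eU σ i j * eX σ (pt F j) := by
          have : eU σ i j * eU σ i j = eU σ i j := avg_idem _ _
          rw [this]
        _ = _ := eX_eU_eX σ hij
    rw [this]

end applyLemmas
end TZ


set_option linter.unusedSectionVars false
namespace TZ
open LinearMap Module

section chars
variable {V : Type*} [AddCommGroup V] [Module ℂ V] [FiniteDimensional ℂ V]
variable {A : Type*} [AddCommGroup A] [Fintype A]

/-- character idempotent -/
noncomputable def eC (t : A → End ℂ V) (χ : AddChar A ℂ) : End ℂ V :=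
  (Fintype.card A : ℂ)⁻¹ • ∑ a, χ (-a) • t a

lemma cardA_ne : (Fintype.card A : ℂ) ≠ 0 := by exact_mod_cast Fintype.card_ne_zero

lemma t_mul_eC (t : A → End ℂ V) (ht : ∀ a b, t (a + b) = t a * t b) (χ : AddChar A ℂ) (a : A) :
    t a * eC t χ = χ a • eC t χ := by
  rw [eC, mul_smul_comm, smul_comm (χ a), Finset.mul_sum, Finset.smul_sum (r := χ a)]
  refine congrArg _ ?_
  refine Fintype.sum_equiv (Equiv.addLeft a) _ _ fun b => ?_
  simp only [Equiv.coe_addLeft, mul_smul_comm, smul_smul, ← AddChar.map_add_eq_mul, ht]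
  congr 2
  abel

lemma eC_mul (t : A → End ℂ V) (ht : ∀ a b, t (a + b) = t a * t b) (χ χ' : AddChar A ℂ) :
    eC t χ * eC t χ' = if χ = χ' then eC t χ' else 0 := by
  classical
  conv_lhs => rw [eC]
  rw [smul_mul_assoc, Finset.sum_mul]
  simp_rw [smul_mul_assoc, t_mul_eC t ht, smul_smul]
  rw [← Finset.sum_smul]
  have : ∑ a, χ (-a) * χ' a = ∑ a, (χ' - χ) a := by
    refine Finset.sum_congr rfl fun a _ => ?_
    rw [AddChar.sub_apply, mul_comm]
  rw [this, AddChar.sum_eq_ite, smul_smul]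
  by_cases h : χ = χ'
  · subst h; simp
  · have : χ' - χ ≠ 0 := by rw [sub_ne_zero]; exact fun e => h e.symm
    simp [h, this]

lemma eC_sum (t : A → End ℂ V) (h0 : t 0 = 1) : ∑ χ : AddChar A ℂ, eC t χ = 1 := by
  classical
  unfold eC
  rw [← Finset.smul_sum, Finset.sum_comm]
  simp_rw [← Finset.sum_smul, AddChar.sum_apply_eq_ite]
  rw [Finset.sum_eq_single 0]
  · simp [h0, smul_smul]
  · intro a _ ha; simp [ha]
  · simp

lemma eC_zero (t : A → End ℂ V) : eC t 0 = (Fintype.card A : ℂ)⁻¹ • ∑ a, t a := by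
  simp [eC]

lemma eC_trace (t : A → End ℂ V) (τ : ℂ) (hτ : ∀ a, a ≠ 0 → trace ℂ V (t a) = τ)
    (h0 : t 0 = 1) (χ : AddChar A ℂ) (hχ : χ ≠ 0) :
    trace ℂ V (eC t χ) = (Fintype.card A : ℂ)⁻¹ * (finrank ℂ V - τ) := by
  classical
  rw [eC, map_smul, map_sum, smul_eq_mul]
  congr 1
  have e1 : ∀ a, trace ℂ V (χ (-a) • t a) = χ (-a) * τ + if a = 0 then (finrank ℂ V : ℂ) - τ else 0 := by
    intro a
    by_cases ha : a = 0
    · subst ha; simp [h0, LinearMap.trace_one]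
    · simp [ha, hτ a ha]
  simp_rw [e1]
  rw [Finset.sum_add_distrib, ← Finset.sum_mul]
  have : ∑ a, χ (-a) = 0 := by
    rw [Fintype.sum_equiv (Equiv.neg A) (fun a => χ (-a)) χ (fun a => rfl), AddChar.sum_eq_ite]
    simp [hχ]
  rw [this]; simp

lemma eC_conj (t : A → End ℂ V) (b : End ℂ V) (α : A ≃+ A)
    (h : ∀ a, b * t a = t (α a) * b) (χ : AddChar A ℂ) :
    b * eC t χ = eC t (χ.compAddMonoidHom α.symm.toAddMonoidHom) * b := by
  unfold eC
  rw [mul_smul_comm, smul_mul_assoc, Finset.mul_sum, Finset.sum_mul]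
  congr 1
  refine Fintype.sum_equiv α.toEquiv _ _ fun a => ?_
  rw [mul_smul_comm, h, smul_mul_assoc]
  congr 1
  simp only [AddChar.compAddMonoidHom_apply]
  congr 1
  change -a = α.symm (-(α a))
  rw [map_neg, AddEquiv.symm_apply_apply]

lemma trace_eC_off (t : A → End ℂ V) (ht : ∀ a b, t (a + b) = t a * t b) (b : End ℂ V)
    (χ χ' : AddChar A ℂ) (hne : χ' ≠ χ) (h : b * eC t χ = eC t χ' * b) :
    trace ℂ V (b * eC t χ) = 0 := by
  have : eC t χ = eC t χ * eC t χ := by rw [eC_mul t ht]; simp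
  rw [this, ← mul_assoc, h, mul_assoc, trace_mul_comm, mul_assoc, eC_mul t ht]
  simp [hne.symm]

lemma rank_one (e a : End ℂ V) (he : e * e = e) (h1 : trace ℂ V e = 1) (hc : Commute a e) :
    ∃ c : ℂ, a * e = c • e := by
  have hr : trace ℂ V e = finrank ℂ (LinearMap.range e) :=
    LinearMap.IsProj.trace (LinearMap.IsIdempotentElem.isProj_range e he)
  rw [h1] at hr
  have hr' : finrank ℂ (LinearMap.range e) = 1 := by exact_mod_cast hr.symm
  obtain ⟨v, -, hv⟩ := finrank_eq_one_iff'.1 hr'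
  have hav : a v.1 ∈ LinearMap.range e := by
    obtain ⟨w, hw⟩ := v.2
    refine ⟨a w, ?_⟩
    rw [← hw]
    exact (LinearMap.congr_fun hc.eq w).symm
  obtain ⟨c, hcv⟩ := hv ⟨_, hav⟩
  refine ⟨c, ?_⟩
  ext w
  obtain ⟨c', hc'⟩ := hv ⟨e w, ⟨w, rfl⟩⟩
  have e1 : c' • v.1 = e w := congrArg Subtype.val hc'
  have e2 : c • v.1 = a v.1 := congrArg Subtype.val hcv
  simp only [Module.End.mul_apply, LinearMap.smul_apply]
  rw [← e1, map_smul, ← e2, smul_comm]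

lemma idem_full (e : End ℂ V) (he : e * e = e) (h : trace ℂ V e = finrank ℂ V) : e = 1 := by
  have h1 : (1 - e) * (1 - e) = 1 - e := by
    rw [mul_sub, sub_mul, sub_mul, he]; simp
  have : trace ℂ V (1 - e) = 0 := by rw [map_sub, h, LinearMap.trace_one, sub_self]
  have hr : trace ℂ V (1 - e) = finrank ℂ (LinearMap.range (1 - e)) :=
    LinearMap.IsProj.trace (LinearMap.IsIdempotentElem.isProj_range _ h1)
  rw [this] at hr
  have hr' : finrank ℂ (LinearMap.range (1 - e)) = 0 := by exact_mod_cast hr.symm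
  rw [Submodule.finrank_eq_zero, LinearMap.range_eq_bot, sub_eq_zero] at hr'
  exact hr'.symm

/-- number of characters killing a vector -/
lemma card_chars {p : ℕ} [Fact p.Prime] [Module (ZMod p) A] (φ : A) (hφ : φ ≠ 0)
    [DecidablePred fun χ : AddChar A ℂ => χ φ = 1] :
    p * (Finset.univ.filter fun χ : AddChar A ℂ => χ φ = 1).card = Fintype.card A := by
  classical
  have key : ∀ χ : AddChar A ℂ, ∑ c : ZMod p, χ (c • φ) = if χ φ = 1 then (p : ℂ) else 0 := by
    intro χ
    have := AddChar.sum_eq_ite (χ.compAddMonoidHom (LinearMap.toSpanSingleton (ZMod p) A φ).toAddMonoidHom)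
    simp only [AddChar.compAddMonoidHom_apply] at this
    have e : ∀ c : ZMod p, (LinearMap.toSpanSingleton (ZMod p) A φ).toAddMonoidHom c = c • φ := fun c => rfl
    simp_rw [e] at this
    rw [this, ZMod.card]
    congr 1
    apply propext
    constructor
    · intro h
      have := DFunLike.congr_fun h (1 : ZMod p)
      simpa [e] using this
    · intro h
      ext c
      simp only [AddChar.compAddMonoidHom_apply, e, AddChar.zero_apply]
      rw [← ZMod.natCast_zmod_val c, Nat.cast_smul_eq_nsmul, AddChar.map_nsmul_eq_pow, h, one_pow]
  have h1 : ∑ χ : AddChar A ℂ, ∑ c : ZMod p, χ (c • φ) = Fintype.card A := by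
    rw [Finset.sum_comm]
    simp_rw [AddChar.sum_apply_eq_ite]
    rw [Finset.sum_eq_single 0]
    · simp
    · intro c _ hc; rw [if_neg]; exact smul_ne_zero hc hφ
    · simp
  simp_rw [key] at h1
  rw [← Finset.sum_filter, Finset.sum_const, nsmul_eq_mul] at h1
  have : (((Finset.univ.filter fun χ : AddChar A ℂ => χ φ = 1).card * p : ℕ) : ℂ) = Fintype.card A := by
    push_cast; exact h1
  rw [mul_comm]; exact_mod_cast this

end chars
end TZ


set_option linter.unusedSectionVars false
namespace TZ
open LinearMap Module
open scoped LinearAlgebra.Projectivization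

section concrete
variable {ι F : Type*} [Fintype ι] [DecidableEq ι] [Field F] [Fintype F]
variable {V : Type*} [AddCommGroup V] [Module ℂ V] [FiniteDimensional ℂ V]

lemma ex_notMem (S : Finset ι) (h : S.card < Fintype.card ι) : ∃ m, m ∉ S := by
  by_contra hc
  push Not at hc
  rw [Finset.eq_univ_of_forall hc, Finset.card_univ] at h
  omega

lemma trace_tv_step (σ : SpecialLinearGroup ι F →* End ℂ V) {x φ φ' y : ι → F}
    (h : φ ⬝ᵥ x = 0) (h' : φ' ⬝ᵥ x = 0) (hy : φ ⬝ᵥ y = 1) (hy' : φ' ⬝ᵥ y = 1) :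
    trace ℂ V (σ (tv x φ)) = trace ℂ V (σ (tv x φ')) := by
  have h1 : (φ - φ') ⬝ᵥ y = 0 := by rw [sub_dotProduct, hy, hy', sub_self]
  have h2 : (φ - φ') ⬝ᵥ x = 0 := by rw [sub_dotProduct, h, h', sub_self]
  apply trace_conj σ (tv y (φ - φ'))
  rw [← map_mul, ← map_mul, tv_conj (ψ := φ') _ h]
  · rw [tv_smul h1, h2, zero_smul, add_zero]
  · intro v
    rw [tv_smul h1, dotProduct_add, dotProduct_smul, hy', sub_dotProduct]
    simp

lemma trace_tv_const (σ : SpecialLinearGroup ι F →* End ℂ V) {i l m : ι} (hl : l ≠ i) (hm : m ≠ i)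
    (hml : m ≠ l) {φ : ι → F} (h : φ i = 0) (h0 : φ ≠ 0) :
    trace ℂ V (σ (tv (ev F i) φ)) = trace ℂ V (σ (tv (ev F i) (ev F l))) := by
  have caseA : ∀ (φ : ι → F) (_ : φ i = 0) (k l : ι) (_ : l ≠ i) (_ : k ≠ l) (_ : φ k ≠ 0),
      trace ℂ V (σ (tv (ev F i) φ)) = trace ℂ V (σ (tv (ev F i) (ev F l))) := by
    intro φ h k l hl hkl hk
    refine trace_tv_step σ (y := ev F l + ((1 - φ l) / φ k) • ev F k) (by rw [dot_ev, h])
      (by rw [dot_ev]; simp [hl]) ?_ ?_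
    · rw [dotProduct_add, dotProduct_smul, dot_ev, dot_ev, smul_eq_mul, div_mul_cancel₀ _ hk]
      ring
    · rw [dotProduct_add, dotProduct_smul, dot_ev, dot_ev]
      simp [hkl.symm]
  by_cases hA : ∃ k, k ≠ l ∧ φ k ≠ 0
  · obtain ⟨k, h1, h2⟩ := hA
    exact caseA φ h k l hl h1 h2
  · push Not at hA
    have hll : φ l ≠ 0 := by
      intro hz
      apply h0
      ext k
      by_cases hk : k = l
      · rw [hk, hz]; rfl
      · exact hA k hk
    rw [caseA φ h l m hm hml.symm hll]
    exact caseA (ev F m) (by simp [hm]) m l hl hml (by simp)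

lemma tv_other {i j : ι} (hij : i ≠ j) {ψ : ι → F}
    (h : ψ j = 0) (h0 : ψ ≠ 0) :
    ∃ φ : ι → F, φ i = 0 ∧ φ ≠ 0 ∧
      ∃ g : SpecialLinearGroup ι F, g * tv (ev F j) ψ = tv (ev F i) φ * g := by
  obtain ⟨g, hg, -⟩ := two_trans (pt_ne (F := F) hij.symm) (pt_ne (F := F) hij)
  have h1 : g • ev F j ∈ (pt F i).submodule := by
    rw [← hg, ← proj_smul, pt_submodule]; exact Submodule.mem_span_singleton_self _
  rw [pt_submodule, Submodule.mem_span_singleton] at h1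
  obtain ⟨c, hc⟩ := h1
  have hc0 : c ≠ 0 := by
    rintro rfl
    rw [zero_smul] at hc
    have : g • ev F j = g • (0 : ι → F) := by rw [← hc, smul_zero]
    exact ev_ne j (smul_left_cancel g this)
  set ψ' : ι → F := ψ ᵥ* (g⁻¹ : SpecialLinearGroup ι F) with hψ'
  have e1 : ∀ v : ι → F, ψ' ⬝ᵥ (g • v) = ψ ⬝ᵥ v := by
    intro v
    rw [hψ', ← dotProduct_mulVec, ← sl_smul, inv_smul_smul]
  have hd : ψ ⬝ᵥ ev F j = 0 := by rw [dot_ev, h]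
  have hd' : ψ' ⬝ᵥ ev F i = 0 := by
    have := e1 (ev F j)
    rw [← hc, hd, dotProduct_smul, smul_eq_mul] at this
    exact (mul_eq_zero.1 this).resolve_left hc0
  refine ⟨c • ψ', ?_, ?_, g, ?_⟩
  · rw [dot_ev] at hd'; simp [hd']
  · intro hz
    have hz' : ψ' = 0 := (smul_eq_zero.1 hz).resolve_left hc0
    apply h0
    ext k
    have := e1 (ev F k)
    rw [hz', zero_dotProduct, dot_ev] at this
    exact this.symm
  · rw [tv_conj g hd e1, ← hc, tv_smul_smul _ _ hd']

/-- the representation of `K` -/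
noncomputable def tt (σ : SpecialLinearGroup ι F →* End ℂ V) (i : ι)
    (φ : Kz F ({i} : Finset ι)) : End ℂ V := σ (tv (ev F i) φ)

lemma Kz_dot {i : ι} (φ : Kz F ({i} : Finset ι)) : (φ : ι → F) ⬝ᵥ ev F i = 0 := by
  rw [dot_ev]; exact φ.2 i (by simp)

lemma tt_add (σ : SpecialLinearGroup ι F →* End ℂ V) (i : ι) (a b) :
    tt σ i (a + b) = tt σ i a * tt σ i b := by
  unfold tt
  rw [← map_mul, tv_mul (Kz_dot a) (Kz_dot b)]; rfl

lemma tt_zero (σ : SpecialLinearGroup ι F →* End ℂ V) (i : ι) : tt σ i 0 = 1 := by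
  unfold tt
  rw [Submodule.coe_zero, tv_zero, map_one]

lemma eX_eq_eC (σ : SpecialLinearGroup ι F →* End ℂ V) (i : ι) [Fintype (Kz F ({i} : Finset ι))] :
    eX σ (pt F i) = eC (tt σ i) 0 := by
  rw [eC_zero, eX, pt_submodule]
  exact avg_param σ _ (fun φ : Kz F ({i} : Finset ι) => tv (ev F i) φ)
    (fun a b h => Subtype.ext (tv_injective (ev_ne i) (Kz_dot a) (Kz_dot b) h)) (mem_US_span i)

/-- the shear on `K` induced by conjugating with `tv z ψ` -/
def shear {i : ι} (z ψ : ι → F) (h1 : ψ ⬝ᵥ z = 0) (h2 : ψ i = 0) :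
    Kz F ({i} : Finset ι) ≃+ Kz F ({i} : Finset ι) where
  toFun φ := ⟨φ - ((φ : ι → F) ⬝ᵥ z) • ψ, by
    intro k hk
    have := φ.2 k hk
    simp only [Finset.mem_singleton] at hk
    subst hk
    simp [this, h2]⟩
  invFun φ := ⟨φ + ((φ : ι → F) ⬝ᵥ z) • ψ, by
    intro k hk
    have := φ.2 k hk
    simp only [Finset.mem_singleton] at hk
    subst hk
    simp [this, h2]⟩
  left_inv φ := by
    apply Subtype.ext
    simp [sub_dotProduct, smul_dotProduct, h1]
  right_inv φ := by
    apply Subtype.ext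
    simp [add_dotProduct, smul_dotProduct, h1]
  map_add' a b := by
    apply Subtype.ext
    simp only [Submodule.coe_add, add_dotProduct, add_smul]
    abel

lemma shear_conj (σ : SpecialLinearGroup ι F →* End ℂ V) {i : ι} {z ψ : ι → F} (h1 : ψ ⬝ᵥ z = 0)
    (h2 : ψ i = 0) (φ : Kz F ({i} : Finset ι)) :
    σ (tv z ψ) * tt σ i φ = tt σ i (shear z ψ h1 h2 φ) * σ (tv z ψ) := by
  unfold tt
  rw [← map_mul, ← map_mul, tv_conj (ψ := (shear z ψ h1 h2 φ : ι → F)) _ (Kz_dot φ)]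
  · rw [tv_smul h1, dot_ev, h2, zero_smul, add_zero]
  · intro v
    rw [tv_smul h1]
    simp only [shear, AddEquiv.coe_mk, Equiv.coe_fn_mk, sub_dotProduct, smul_dotProduct,
      dotProduct_add, dotProduct_smul, h1, smul_eq_mul]
    ring

lemma shear_commute (σ : SpecialLinearGroup ι F →* End ℂ V) {i : ι} [Fintype (Kz F ({i} : Finset ι))]
    {z ψ : ι → F} (h1 : ψ ⬝ᵥ z = 0) (h2 : ψ ∈ Kz F ({i} : Finset ι))
    (χ : AddChar (Kz F ({i} : Finset ι)) ℂ)
    (hχ : ∀ c : F, χ (c • ⟨ψ, h2⟩) = 1) : Commute (σ (tv z ψ)) (eC (tt σ i) χ) := by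
  have h2' : ψ i = 0 := h2 i (by simp)
  have := eC_conj (tt σ i) (σ (tv z ψ)) (shear z ψ h1 h2') (shear_conj σ h1 h2') χ
  have e : χ.compAddMonoidHom (shear z ψ h1 h2').symm.toAddMonoidHom = χ := by
    ext φ
    rw [AddChar.compAddMonoidHom_apply]
    have : (shear z ψ h1 h2').symm.toAddMonoidHom φ = φ + ((φ : ι → F) ⬝ᵥ z) • ⟨ψ, h2⟩ := rfl
    rw [this, AddChar.map_add_eq_mul, hχ, mul_one]
  rw [e] at this
  exact this

lemma commutator_rel {j : ι} {θ φ' y : ι → F} (hθj : θ j = 0) (hφj : φ' j = 0)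
    (hy : θ ⬝ᵥ y = 1) (hy' : φ' ⬝ᵥ y = 0) :
    tv (ev F j) θ * tv y φ' = tv (ev F j) φ' * (tv y φ' * tv (ev F j) θ) := by
  have a1 : θ ⬝ᵥ ev F j = 0 := by rw [dot_ev, hθj]
  have a2 : φ' ⬝ᵥ ev F j = 0 := by rw [dot_ev, hφj]
  apply sl_ext; intro v
  simp only [mul_smul, tv_smul a1, tv_smul a2, tv_smul hy', dotProduct_add, dotProduct_smul,
    a2, hy, hy', smul_eq_mul]
  ext k
  simp only [Pi.add_apply, Pi.smul_apply, smul_eq_mul]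
  ring

end concrete
end TZ


set_option linter.unusedSectionVars false
namespace TZ
open LinearMap Module
open scoped LinearAlgebra.Projectivization

section modp
variable {p : ℕ} [Fact p.Prime]

lemma char_smul {A : Type*} [AddCommGroup A] [Module (ZMod p) A] (χ : AddChar A ℂ) {φ : A}
    (h : χ φ = 1) (c : ZMod p) : χ (c • φ) = 1 := by
  rw [← ZMod.natCast_zmod_val c, Nat.cast_smul_eq_nsmul, AddChar.map_nsmul_eq_pow, h, one_pow]

lemma char_comb {A : Type*} [AddCommGroup A] [Module (ZMod p) A] (χ : AddChar A ℂ) (a b : A) :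
    χ a = 1 ∨ ∃ c : ZMod p, χ (b - c • a) = 1 := by
  by_cases h : χ a = 1
  · exact Or.inl h
  right
  have hp : ∀ x : A, χ x ^ p = 1 := by
    intro x
    rw [← AddChar.map_nsmul_eq_pow, ← Nat.cast_smul_eq_nsmul (ZMod p), ZMod.natCast_self, zero_smul,
      AddChar.map_zero_eq_one]
  have hprim : IsPrimitiveRoot (χ a) p := by
    rw [← orderOf_eq_prime (hp a) h]; exact IsPrimitiveRoot.orderOf _
  obtain ⟨t, -, ht⟩ := hprim.eq_pow_of_pow_eq_one (hp b)
  refine ⟨t, ?_⟩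
  rw [Nat.cast_smul_eq_nsmul, AddChar.map_sub_eq_div, AddChar.map_nsmul_eq_pow, ht, div_self]
  intro h0
  have := hp b
  rw [h0, zero_pow (Fact.out : p.Prime).ne_zero] at this
  exact zero_ne_one this

variable {ι : Type*} [Fintype ι] [DecidableEq ι]
variable {V : Type*} [AddCommGroup V] [Module ℂ V] [FiniteDimensional ℂ V]

lemma exists_theta {i j : ι} (h5 : 5 ≤ Fintype.card ι)
    (χ : AddChar (Kz (ZMod p) ({i} : Finset ι)) ℂ) {φ' : ι → ZMod p}
    (hφ : φ' ∈ Kz (ZMod p) {i, j}) (h0 : φ' ≠ 0) :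
    ∃ (θ : Kz (ZMod p) ({i} : Finset ι)) (y : ι → ZMod p), θ.1 j = 0 ∧ χ θ = 1 ∧
      θ.1 ⬝ᵥ y = 1 ∧ φ' ⬝ᵥ y = 0 := by
  obtain ⟨a, ha⟩ : ∃ a, φ' a ≠ 0 := by
    by_contra hc; push Not at hc; exact h0 (funext hc)
  obtain ⟨u, hu⟩ := ex_notMem ({i, j, a} : Finset ι) (lt_of_le_of_lt Finset.card_le_three (by omega))
  obtain ⟨w, hw⟩ := ex_notMem ({i, j, a, u} : Finset ι) (lt_of_le_of_lt Finset.card_le_four (by omega))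
  simp only [Finset.mem_insert, Finset.mem_singleton, not_or] at hu hw
  obtain ⟨hui, huj, hua⟩ := hu
  obtain ⟨hwi, hwj, hwa, hwu⟩ := hw
  have mk : ∀ b, b ≠ i → ev (ZMod p) b ∈ Kz (ZMod p) ({i} : Finset ι) := by
    intro b hb k hk
    simp only [Finset.mem_singleton] at hk
    subst hk
    simp [hb]
  have fin : ∀ (θ : Kz (ZMod p) ({i} : Finset ι)) (b : ι), θ.1 b = 1 → θ.1 a = 0 →
      θ.1 ⬝ᵥ (ev (ZMod p) b - (φ' b / φ' a) • ev (ZMod p) a) = 1 ∧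
      φ' ⬝ᵥ (ev (ZMod p) b - (φ' b / φ' a) • ev (ZMod p) a) = 0 := by
    intro θ b hb h
    constructor
    · rw [dotProduct_sub, dotProduct_smul, dot_ev, dot_ev, h, hb]; simp
    · rw [dotProduct_sub, dotProduct_smul, dot_ev, dot_ev, smul_eq_mul, div_mul_cancel₀ _ ha, sub_self]
  rcases char_comb (p := p) χ ⟨_, mk u hui⟩ ⟨_, mk w hwi⟩ with h | ⟨c, h⟩
  · refine ⟨_, _, ?_, h, fin _ u ?_ ?_⟩
    · simp [Ne.symm huj]
    · simp
    · simp [Ne.symm hua]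
  · refine ⟨_, _, ?_, h, fin _ w ?_ ?_⟩
    · simp [Ne.symm huj, Ne.symm hwj]
    · simp [hwu]
    · simp [Ne.symm hua, Ne.symm hwa]

lemma fix_eC (σ : SpecialLinearGroup ι (ZMod p) →* End ℂ V) {i j : ι}
    [Fintype (Kz (ZMod p) ({i} : Finset ι))]
    (h5 : 5 ≤ Fintype.card ι) (χ : AddChar (Kz (ZMod p) ({i} : Finset ι)) ℂ)
    (htr : trace ℂ V (eC (tt σ i) χ) = 1) {φ' : ι → ZMod p}
    (hφ : φ' ∈ Kz (ZMod p) {i, j}) (h0 : φ' ≠ 0) (hχ : χ ⟨φ', Kz_pair_left hφ⟩ = 1) :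
    σ (tv (ev _ j) φ') * eC (tt σ i) χ = eC (tt σ i) χ := by
  obtain ⟨θ, y, hθj, hθχ, hy, hy'⟩ := exists_theta (i := i) (j := j) h5 χ hφ h0
  have hφj : φ' j = 0 := hφ j (by simp)
  have c1 : Commute (σ (tv (ev _ j) θ.1)) (eC (tt σ i) χ) :=
    shear_commute σ (by rw [dot_ev, hθj]) θ.2 χ (char_smul χ hθχ)
  have c2 : Commute (σ (tv y φ')) (eC (tt σ i) χ) :=
    shear_commute σ hy' (Kz_pair_left hφ) χ (char_smul χ hχ)
  set e := eC (tt σ i) χ with he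
  have hid : e * e = e := by rw [he, eC_mul _ (tt_add σ i)]; simp
  have hne : e ≠ 0 := by
    intro h; rw [h, map_zero] at htr; exact zero_ne_one htr
  obtain ⟨a, ha⟩ := rank_one e _ hid htr c1
  obtain ⟨b, hb⟩ := rank_one e _ hid htr c2
  have inv1 : ∀ g : SpecialLinearGroup ι (ZMod p), σ g⁻¹ * σ g = 1 := by
    intro g; rw [← map_mul]; simp
  have nz : ∀ (g : SpecialLinearGroup ι (ZMod p)) (c : ℂ), σ g * e = c • e → c ≠ 0 := by
    rintro g c h rfl
    rw [zero_smul] at h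
    apply hne
    calc e = σ g⁻¹ * (σ g * e) := by rw [← mul_assoc, inv1, one_mul]
      _ = 0 := by rw [h, mul_zero]
  have rel := congrArg (fun g => σ g * e) (commutator_rel hθj hφj hy hy')
  simp only [map_mul, mul_assoc] at rel
  rw [hb, mul_smul_comm, ha, mul_smul_comm, hb, smul_smul, smul_smul, mul_smul_comm, mul_comm a b] at rel
  have := smul_right_injective (End ℂ V) (mul_ne_zero (nz _ _ hb) (nz _ _ ha)) rel
  exact this.symm

theorem dataC (σ : SpecialLinearGroup ι (ZMod p) →* End ℂ V) {i j : ι} (hij : i ≠ j)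
    (h5 : 5 ≤ Fintype.card ι) :
    ∃ m : ℕ, ∃ d : ℕ, trace ℂ V (eX σ (pt _ i)) = d ∧
      (finrank ℂ V : ℂ) = d + ((p : ℂ) ^ (Fintype.card ι - 1) - 1) * m ∧
      (m = 0 → ∀ φ : Kz (ZMod p) ({i} : Finset ι), σ (tv (ev _ i) φ) = 1) ∧
      (m = 1 → trace ℂ V (eX σ (pt _ i) * eU σ i j) =
        d - ((p : ℂ) ^ (Fintype.card ι - 2) - 1)) := by
  classical
  have instK := Fintype.ofFinite (Kz (ZMod p) ({i} : Finset ι))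
  have instC := Fintype.ofFinite (Kz (ZMod p) ({i, j} : Finset ι))
  have cardK : Fintype.card (Kz (ZMod p) ({i} : Finset ι)) = p ^ (Fintype.card ι - 1) := by
    rw [card_Kz, ZMod.card, Finset.card_singleton]
  have cardC : Fintype.card (Kz (ZMod p) ({i, j} : Finset ι)) = p ^ (Fintype.card ι - 2) := by
    rw [card_Kz, ZMod.card, Finset.card_pair hij]
  obtain ⟨l, hl⟩ := ex_notMem ({i, j} : Finset ι) (lt_of_le_of_lt Finset.card_le_two (by omega))
  simp only [Finset.mem_insert, Finset.mem_singleton, not_or] at hl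
  set τ := trace ℂ V (σ (tv (ev _ i) (ev _ j))) with hτ
  have hτK : ∀ φ : ι → ZMod p, φ i = 0 → φ ≠ 0 → trace ℂ V (σ (tv (ev _ i) φ)) = τ :=
    fun φ h h0 => trace_tv_const σ hij.symm hl.1 hl.2 h h0
  have hτ' : ∀ a : Kz (ZMod p) ({i} : Finset ι), a ≠ 0 → trace ℂ V (tt σ i a) = τ := by
    intro a ha
    exact hτK a (a.2 i (by simp)) (fun h => ha (Subtype.ext h))
  have hτj : ∀ φ : ι → ZMod p, φ j = 0 → φ ≠ 0 → trace ℂ V (σ (tv (ev _ j) φ)) = τ := by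
    intro φ h h0
    obtain ⟨φ', h', h0', g, hg⟩ := tv_other hij h h0
    rw [← hτK φ' h' h0']
    apply trace_conj σ g
    rw [← map_mul, hg, map_mul]
  set E := eC (tt σ i) with hE
  have E0 : eX σ (pt _ i) = E 0 := eX_eq_eC σ i
  have Eid : ∀ χ, E χ * E χ = E χ := by
    intro χ; rw [hE, eC_mul _ (tt_add σ i)]; simp
  obtain ⟨d, -, hd⟩ := trace_idem_nat (E 0) (Eid 0)
  have cardχ : Fintype.card (AddChar (Kz (ZMod p) ({i} : Finset ι)) ℂ) = p ^ (Fintype.card ι - 1) := by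
    rw [← cardK]; exact AddChar.card_eq
  have hp2 := (Fact.out : p.Prime).two_le
  have hbig : 1 < p ^ (Fintype.card ι - 1) := Nat.one_lt_pow (by omega) (by omega)
  have nt : Nontrivial (AddChar (Kz (ZMod p) ({i} : Finset ι)) ℂ) := by
    rw [← Fintype.one_lt_card_iff_nontrivial, cardχ]; exact hbig
  obtain ⟨χ1, hχ1⟩ := exists_ne (0 : AddChar (Kz (ZMod p) ({i} : Finset ι)) ℂ)
  obtain ⟨m, -, hm⟩ := trace_idem_nat (E χ1) (Eid χ1)
  have Etr := eC_trace (tt σ i) τ hτ' (tt_zero σ i)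
  have hm' : ∀ χ, χ ≠ 0 → trace ℂ V (E χ) = m := by
    intro χ hχ
    rw [← hm, hE, Etr χ hχ, Etr χ1 hχ1]
  have split : ∀ b : End ℂ V, trace ℂ V b = trace ℂ V (b * E 0) +
      ∑ χ ∈ Finset.univ.erase 0, trace ℂ V (b * E χ) := by
    intro b
    rw [Finset.add_sum_erase _ (fun χ => trace ℂ V (b * E χ)) (Finset.mem_univ 0), ← map_sum, ← Finset.mul_sum,
      eC_sum _ (tt_zero σ i), mul_one]
  have hN : (finrank ℂ V : ℂ) = d + ((p : ℂ) ^ (Fintype.card ι - 1) - 1) * m := by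
    have := split 1
    rw [LinearMap.trace_one] at this
    simp only [one_mul] at this
    rw [this, hd, Finset.sum_congr rfl (fun χ hχ => hm' χ (Finset.ne_of_mem_erase hχ)),
      Finset.sum_const, Finset.card_erase_of_mem (Finset.mem_univ _), Finset.card_univ, cardχ,
      nsmul_eq_mul, Nat.cast_sub hbig.le]
    push_cast; rfl
  have hτm : (finrank ℂ V : ℂ) - τ = (p : ℂ) ^ (Fintype.card ι - 1) * m := by
    have h1 := hm
    rw [hE, Etr χ1 hχ1, cardK] at h1
    have : ((p ^ (Fintype.card ι - 1) : ℕ) : ℂ) ≠ 0 := by exact_mod_cast (by omega)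
    rw [inv_mul_eq_iff_eq_mul₀ this] at h1
    rw [h1]; push_cast; rfl
  refine ⟨m, d, by rw [E0, hd], hN, ?_, ?_⟩
  · rintro rfl φ
    have h1 : E 0 = 1 := by
      apply idem_full _ (Eid 0)
      rw [hd, hN]; simp
    have h2 := t_mul_eC (tt σ i) (tt_add σ i) 0 φ
    rw [← hE, h1] at h2
    simpa [tt] using h2
  · rintro rfl
    -- C3
    have C3 : ∀ φ' : Kz (ZMod p) ({i, j} : Finset ι), φ' ≠ 0 →
        trace ℂ V (σ (tv (ev _ j) φ'.1) * E 0) = d - (p : ℂ) ^ (Fintype.card ι - 2) := by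
      intro φ' hφ'
      have h0 : φ'.1 ≠ 0 := fun h => hφ' (Subtype.ext h)
      have hjj : φ'.1 j = 0 := φ'.2 j (by simp)
      have hii : φ'.1 i = 0 := φ'.2 i (by simp)
      have hdj : φ'.1 ⬝ᵥ ev _ j = 0 := by rw [dot_ev, hjj]
      set ψ : Kz (ZMod p) ({i} : Finset ι) := ⟨φ'.1, Kz_pair_left φ'.2⟩ with hψ
      have hψ0 : ψ ≠ 0 := fun h => h0 (congrArg Subtype.val h)
      have term : ∀ χ ∈ Finset.univ.erase (0 : AddChar (Kz (ZMod p) ({i} : Finset ι)) ℂ),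
          trace ℂ V (σ (tv (ev _ j) φ'.1) * E χ) = if χ ψ = 1 then 1 else 0 := by
        intro χ hχ
        have hχ0 := Finset.ne_of_mem_erase hχ
        have htr : trace ℂ V (E χ) = 1 := by rw [hm' χ hχ0]; simp
        split_ifs with hc
        · rw [hE, fix_eC σ h5 χ htr φ'.2 h0 hc, ← hE, htr]
        · have := eC_conj (tt σ i) (σ (tv (ev _ j) φ'.1)) (shear (ev _ j) φ'.1 hdj hii)
            (shear_conj σ hdj hii) χ
          refine trace_eC_off _ (tt_add σ i) _ _ _ ?_ this
          intro heq
          apply hc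
          have hmem : ev (ZMod p) j ∈ Kz (ZMod p) ({i} : Finset ι) := by
            intro k hk
            simp only [Finset.mem_singleton] at hk
            subst hk
            simp [hij]
          have := DFunLike.congr_fun heq ⟨_, hmem⟩
          rw [AddChar.compAddMonoidHom_apply] at this
          have e2 : (shear (ev _ j) φ'.1 hdj hii).symm.toAddMonoidHom ⟨_, hmem⟩ =
              ⟨_, hmem⟩ + ψ := by
            apply Subtype.ext
            change ev (ZMod p) j + (ev (ZMod p) j ⬝ᵥ ev (ZMod p) j) • φ'.1 = _
            rw [dot_ev]; simp [hψ]
          rw [e2, AddChar.map_add_eq_mul] at this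
          have hne : χ ⟨_, hmem⟩ ≠ 0 := (AddChar.val_isUnit χ _).ne_zero
          exact (mul_eq_left₀ hne).1 this
      have hs := split (σ (tv (ev _ j) φ'.1))
      rw [hτj _ hjj h0, Finset.sum_congr rfl term, Finset.sum_erase_eq_sub (Finset.mem_univ _),
        Finset.sum_boole] at hs
      have hcc := card_chars (p := p) ψ hψ0
      rw [cardK] at hcc
      have hcc' : (Finset.univ.filter fun χ : AddChar (Kz (ZMod p) ({i} : Finset ι)) ℂ =>
          χ ψ = 1).card = p ^ (Fintype.card ι - 2) := by
        have e3 : p ^ (Fintype.card ι - 1) = p * p ^ (Fintype.card ι - 2) := by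
          rw [← pow_succ']; congr 1; omega
        rw [e3] at hcc
        exact Nat.eq_of_mul_eq_mul_left (by omega) hcc
      rw [hcc'] at hs
      rw [if_pos (show (0 : AddChar (Kz (ZMod p) ({i} : Finset ι)) ℂ) ψ = 1 from rfl)] at hs
      push_cast at hs hτm hN
      linear_combination -hs - hτm + hN
    have hpne : ((p : ℂ) ^ (Fintype.card ι - 2)) ≠ 0 :=
      pow_ne_zero _ (by exact_mod_cast (by omega : p ≠ 0))
    rw [eU_param σ hij, mul_smul_comm, map_smul, Finset.mul_sum, map_sum]
    have term2 : ∀ φ : Kz (ZMod p) ({i, j} : Finset ι) × Kz (ZMod p) ({i, j} : Finset ι),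
        trace ℂ V (eX σ (pt _ i) * (σ (tv (ev _ i) φ.1.1) * σ (tv (ev _ j) φ.2.1))) =
        (d - (p : ℂ) ^ (Fintype.card ι - 2)) +
          if φ.2 = 0 then (p : ℂ) ^ (Fintype.card ι - 2) else 0 := by
      intro φ
      rw [← mul_assoc, eX, avg_mul σ _ (tv_mem_US_pt i (Kz_pair_left φ.1.2)), ← eX, E0,
        LinearMap.trace_mul_comm]
      split_ifs with h
      · rw [h, Submodule.coe_zero, tv_zero, map_one, one_mul, hd]; ring
      · rw [C3 _ h, add_zero]
    simp_rw [term2]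
    rw [Finset.sum_add_distrib, Fintype.sum_prod_type, Fintype.sum_prod_type]
    simp only [Finset.sum_const, Finset.card_univ, Fintype.card_prod, cardC, Finset.sum_ite_eq',
      Finset.mem_univ, if_true, nsmul_eq_mul, smul_eq_mul]
    push_cast
    field_simp
    ring

end modp
end TZ


set_option linter.unusedSectionVars false
namespace TZ
open LinearMap Module
open scoped LinearAlgebra.Projectivization

section gen
variable {ι : Type*} [Fintype ι] [DecidableEq ι] {F : Type*} [Field F] [Fintype F]

lemma transvection_eq_tv {i j : ι} (hij : i ≠ j) (a : F) :
    SpecialLinearGroup.transvection hij a = tv (ev F i) (a • ev F j) := by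
  have h : (a • ev F j) ⬝ᵥ ev F i = 0 := by rw [dot_ev]; simp [hij]
  apply sl_ext
  intro v
  rw [tv_smul h, sl_smul, SpecialLinearGroup.transvection_coe, add_mulVec, one_mulVec]
  congr 1
  ext k
  rw [single_mulVec_eq]
  simp

lemma transvection_apply {i j : ι} (hij : i ≠ j) (a : F) (v : ι → F) (k : ι) :
    (SpecialLinearGroup.transvection hij a • v) k = v k + if k = i then a * v j else 0 := by
  have h : (a • ev F j) ⬝ᵥ ev F i = 0 := by rw [dot_ev]; simp [hij]
  rw [transvection_eq_tv, tv_smul h]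
  simp [Pi.single_apply]

lemma diag2n_decompose {i j : ι} (hij : i ≠ j) (a : F) (ha : a ≠ 0) :
    SpecialLinearGroup.diag2n hij a ha = SpecialLinearGroup.transvection hij a *
      SpecialLinearGroup.transvection hij.symm (- a⁻¹) *
      SpecialLinearGroup.transvection hij a *
      SpecialLinearGroup.transvection hij (-1) *
      SpecialLinearGroup.transvection hij.symm 1 *
      SpecialLinearGroup.transvection hij (-1) := by
  apply sl_ext
  intro v
  ext k
  simp only [mul_smul, transvection_apply]
  rw [sl_smul, SpecialLinearGroup.diag2n_coe, mulVec_diagonal]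
  by_cases hi : k = i
  · subst hi
    simp [hij, hij.symm]
    field_simp
    ring
  by_cases hj : k = j
  · subst hj
    simp [hij, hij.symm]
    field_simp
    ring
  simp [hi, hj]

lemma gen_trivial {H : Type*} [Monoid H] (σ : SpecialLinearGroup ι F →* H) (i : ι) [Nontrivial ι]
    (h : ∀ φ : Kz F ({i} : Finset ι), σ (tv (ev _ i) φ) = 1) (g : SpecialLinearGroup ι F) :
    σ g = 1 := by
  have key : ∀ (j : ι) (ψ : ι → F), ψ j = 0 → σ (tv (ev F j) ψ) = 1 := by
    have base : ∀ φ : ι → F, φ i = 0 → σ (tv (ev F i) φ) = 1 := by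
      intro φ hφ
      refine h ⟨φ, ?_⟩
      intro k hk
      simp only [Finset.mem_singleton] at hk
      rw [hk, hφ]
    intro j ψ hψ
    by_cases h0 : ψ = 0
    · rw [h0, tv_zero, map_one]
    by_cases hij : i = j
    · subst hij; exact base ψ hψ
    obtain ⟨φ, hφ, -, g, hg⟩ := tv_other hij hψ h0
    have h1 := congrArg σ hg
    rw [map_mul, map_mul, base φ hφ, one_mul] at h1
    have h2 : σ g⁻¹ * (σ g * σ (tv (ev F j) ψ)) = σ g⁻¹ * σ g := by rw [h1]
    rw [← mul_assoc, ← map_mul] at h2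
    simpa using h2
  have tr : ∀ (a b : ι) (hab : a ≠ b) (c : F), σ (SpecialLinearGroup.transvection hab c) = 1 := by
    intro a b hab c
    rw [transvection_eq_tv]
    apply key
    simp [hab]
  have mu : ∀ A B : SpecialLinearGroup ι F, σ A = 1 → σ B = 1 → σ (A * B) = 1 := by
    intro A B hA hB
    rw [map_mul, hA, hB, one_mul]
  refine SpecialLinearGroup.diagonal_transvection_induction' (fun g => σ g = 1) g ?_ tr mu
  intro a b hab c hc
  rw [diag2n_decompose hab c hc]
  simp only [map_mul, tr, one_mul]
end gen
end TZ


set_option linter.unusedSectionVars false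
namespace TZ
open LinearMap Module
open scoped LinearAlgebra.Projectivization

lemma arith_pos (p q M d e : ℝ) (hp : 2 ≤ p) (hM : (p - 1) * M = p * q - 1) (hM1 : 1 ≤ M)
    (hd0 : 0 ≤ d) (hd : d + 1 ≤ M) (he : q - 1 + (p + 1) / (2 * p) ≤ e)
    (heq : d * (p ^ 2 * q - 1) = p * e * ((p - 1) * M + d)) : False := by
  have hpe : (p - 1) * M + 1 - (p - 1) / 2 ≤ p * e := by
    have h1 : p * (q - 1 + (p + 1) / (2 * p)) ≤ p * e := by gcongr
    have h2 : p * (q - 1 + (p + 1) / (2 * p)) = (p - 1) * M + 1 - (p - 1) / 2 := by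
      rw [hM]; field_simp; ring
    linarith
  have hR : p ^ 2 * q - 1 = (p - 1) * (p * M + 1) := by linear_combination (-p) * hM
  rw [hR] at heq
  have hpos : 0 < (p - 1) * M + d := by nlinarith
  have hpM : 0 < p * M - 1 := by nlinarith
  have h1 : d * (p * M - 1) ≤ (M - 1) * ((p - 1) * M + d) := by
    nlinarith [mul_nonneg (mul_nonneg (by linarith : (0:ℝ) ≤ p - 1) (by linarith : (0:ℝ) ≤ M))
      (by linarith : (0:ℝ) ≤ M - 1 - d)]
  have hRp : 0 < (p - 1) * (p * M + 1) := by
    apply mul_pos <;> nlinarith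
  have h2 : p * e * (p * M - 1) ≤ (M - 1) * ((p - 1) * (p * M + 1)) := by
    refine le_of_mul_le_mul_right ?_ hpos
    calc p * e * (p * M - 1) * ((p - 1) * M + d) = (d * (p * M - 1)) * ((p - 1) * (p * M + 1)) := by
          linear_combination -(p * M - 1) * heq
      _ ≤ ((M - 1) * ((p - 1) * M + d)) * ((p - 1) * (p * M + 1)) := by gcongr
      _ = _ := by ring
  have h3 : ((p - 1) * M + 1 - (p - 1) / 2) * (p * M - 1) ≤ p * e * (p * M - 1) := by gcongr
  have h4 : ((p - 1) * M + 1 - (p - 1) / 2) * (p * M - 1) - (M - 1) * ((p - 1) * (p * M + 1)) =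
      M * ((p - 1) ^ 2 / 2 - (p - 1) / 2 + 1) + 3 * (p - 1) / 2 - 1 := by ring
  have h5 : 0 < M * ((p - 1) ^ 2 / 2 - (p - 1) / 2 + 1) := by
    apply mul_pos (by linarith); nlinarith
  linarith

lemma arith_zero (p q M d : ℤ) (hp : 2 ≤ p) (hq : 8 ≤ q) (hM : (p - 1) * M = p * q - 1)
    (heq : d * (p ^ 2 * q - 1) = p * (q - 1) * ((p - 1) * M + d)) : False := by
  have h1 : (p * q + 1) * ((p - 1) * d) = p * (q - 1) * (p * q - 1) := by
    rw [hM] at heq; linear_combination heq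
  have h2 : p * q + 1 ∣ 2 * (p + 1) := by
    refine ⟨(p - 1) * d - (p * q - 1 - (p + 1)), ?_⟩
    linear_combination -h1
  have h3 := Int.le_of_dvd (by linarith) h2
  nlinarith

variable {ι : Type*} [Fintype ι] [DecidableEq ι]
variable {V : Type*} [AddCommGroup V] [Module ℂ V] [FiniteDimensional ℂ V]

lemma card_proj (p : ℕ) [Fact p.Prime] (h2 : 2 ≤ Fintype.card ι) : ∃ M : ℕ,
    Nat.card (ℙ (ZMod p) (ι → ZMod p)) = p * M + 1 ∧
    (p - 1) * M + 1 = p * p ^ (Fintype.card ι - 2) ∧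
    (p ^ (Fintype.card ι) - p) / (p - 1) = p * M := by
  have hp2 := (Fact.out : p.Prime).two_le
  refine ⟨∑ i ∈ Finset.range (Fintype.card ι - 1), p ^ i, ?_, ?_, ?_⟩
  · rw [Projectivization.card_of_finrank (ZMod p) _ (Module.finrank_fintype_fun_eq_card (ZMod p)), Nat.card_zmod]
    obtain ⟨k, hk⟩ : ∃ k, Fintype.card ι = k + 1 := ⟨Fintype.card ι - 1, by omega⟩
    rw [hk, Finset.sum_range_succ', Finset.mul_sum]
    simp [pow_succ']
  · rw [← pow_succ', mul_comm, Nat.geomSum_eq hp2, Nat.div_mul_cancel (Nat.sub_one_dvd_pow_sub_one ..)]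
    have : 1 ≤ p ^ (Fintype.card ι - 1) := Nat.one_le_pow _ _ (by omega)
    rw [Nat.sub_add_cancel this]
    congr 1; omega
  · have h3 : (p - 1) * (∑ i ∈ Finset.range (Fintype.card ι - 1), p ^ i) = p ^ (Fintype.card ι - 1) - 1 := by
      rw [mul_comm, Nat.geomSum_eq hp2, Nat.div_mul_cancel (Nat.sub_one_dvd_pow_sub_one ..)]
    apply Nat.div_eq_of_eq_mul_right (by omega)
    rw [mul_left_comm, h3, Nat.mul_sub, ← pow_succ', mul_one]
    congr 2; omega

theorem lower_bound {p : ℕ} [Fact p.Prime] (h5 : 5 ≤ Fintype.card ι)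
    (σ : SpecialLinearGroup ι (ZMod p) →* End ℂ V) (hσ : Irr σ) (hne : ∃ g, σ g ≠ 1) :
    (p ^ (Fintype.card ι) - p) / (p - 1) ≤ finrank ℂ V := by
  obtain ⟨M, hR, hM, ht⟩ := card_proj (ι := ι) p (by omega)
  rw [ht]
  have hp2 := (Fact.out : p.Prime).two_le
  have nt : Nontrivial ι := by rw [← Fintype.one_lt_card_iff_nontrivial]; omega
  obtain ⟨i, j, hij⟩ := exists_pair_ne ι
  obtain ⟨m, d, hd, hN, hm0, hm1⟩ := dataC σ hij h5
  set q := p ^ (Fintype.card ι - 2) with hq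
  have hq8 : 8 ≤ q := by
    calc 8 = 2 ^ 3 := by norm_num
      _ ≤ p ^ 3 := Nat.pow_le_pow_left hp2 3
      _ ≤ q := Nat.pow_le_pow_right (by omega) (by omega)
  have hpq : p ^ (Fintype.card ι - 1) = p * q := by
    rw [hq, ← pow_succ']; congr 1; omega
  obtain ⟨k, rfl⟩ : ∃ k, p = k + 1 := ⟨p - 1, by omega⟩
  rw [Nat.add_sub_cancel] at hM
  have hN' : finrank ℂ V = d + (k * M) * m := by
    have e1 : (((k + 1 : ℕ) : ℂ) ^ (Fintype.card ι - 1)) = k * M + 1 := by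
      have : (k + 1) ^ (Fintype.card ι - 1) = k * M + 1 := by rw [hpq, ← hM]
      exact_mod_cast this
    rw [e1, add_sub_cancel_right] at hN
    exact_mod_cast hN
  by_contra hlt
  push Not at hlt
  rcases m with _ | _ | m
  · obtain ⟨g, hg⟩ := hne
    exact hg (gen_trivial σ i (hm0 rfl) g)
  · have hdM : d + 1 ≤ M := by
      rw [hN'] at hlt; nlinarith
    obtain ⟨Δ, hΔ, hs⟩ := apply2 σ hij
    have h1 := apply1 σ hσ hij
    have hm := hm1 rfl
    rw [hd, hR, hN'] at h1
    rw [hm, ZMod.card] at hs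
    generalize trace ℂ V (eX σ (pt (ZMod (k+1)) i) * eX σ (pt (ZMod (k+1)) j)) = T at h1 hs
    have hqc : (((k + 1 : ℕ) : ℂ) ^ (Fintype.card ι - 2)) = q := by rw [hq]; push_cast; rfl
    rw [hqc] at hs
    have hk0 : ((k : ℂ) + 1) ≠ 0 := by exact_mod_cast Nat.succ_ne_zero k
    have hM0 : (M : ℝ) ≠ 0 := by exact_mod_cast (by omega : M ≠ 0)
    have hMr : (k : ℝ) * M + 1 = (k + 1) * q := by exact_mod_cast hM
    set e : ℝ := q - 1 + (k + 2) / (k + 1) * Δ with he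
    have hT : T = ((d - e : ℝ) : ℂ) := by
      rw [he]
      push_cast at hs ⊢
      field_simp
      linear_combination -hs
    rw [hT] at h1
    have h2 : ((d + k * M) * (d + ((k + 1) * M + 1 - 1) * (d - e)) : ℝ) = ((k + 1) * M + 1) * d ^ 2 := by
      have h1' := h1
      push_cast at h1'
      apply Complex.ofReal_injective
      push_cast
      linear_combination h1'
    have h3 : (d : ℝ) * (((k:ℝ) + 1) ^ 2 * q - 1) = (k + 1) * e * ((k + 1 - 1) * M + d) := by
      apply mul_left_cancel₀ hM0
      linear_combination h2 - ((k+1) * M * d : ℝ) * hMr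
    rcases hΔ with h0 | h0
    · apply arith_zero (k + 1) q M d (by exact_mod_cast hp2) (by exact_mod_cast hq8)
      · have : (k : ℤ) * M + 1 = (k + 1) * q := by exact_mod_cast hM
        linear_combination this
      · have : e = q - 1 := by rw [he, h0]; ring
        rw [this] at h3
        exact_mod_cast h3
    · apply arith_pos (k + 1) q M d e (by exact_mod_cast hp2)
      · linear_combination hMr
      · exact_mod_cast (by omega : 1 ≤ M)
      · positivity
      · exact_mod_cast hdM
      · rw [he]
        have h7 : ((k : ℝ) + 2) / (k + 1) * (1 / 2) ≤ (k + 2) / (k + 1) * Δ := by gcongr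
        have h8 : ((k : ℝ) + 1 + 1) / (2 * (k + 1)) = (k + 2) / (k + 1) * (1 / 2) := by
          field_simp; ring
        rw [h8]; linarith
      · exact h3
  · rw [hN'] at hlt
    have : 1 ≤ k := by omega
    nlinarith [Nat.zero_le (k * M * m), Nat.mul_le_mul_right M this]
end TZ

set_option linter.unusedSectionVars false
namespace TZ
open LinearMap Module
open scoped LinearAlgebra.Projectivization

section perm
variable {G : Type*} [Group G] {X : Type*} [Fintype X] [MulAction G X]

variable (X) in
/-- functions with total sum zero -/
def V0 : Submodule ℂ (X → ℂ) where
  carrier := {f | ∑ x, f x = 0}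
  add_mem' := by
    intro a b ha hb
    simp only [Set.mem_ofPred_eq, Pi.add_apply, Finset.sum_add_distrib] at *
    rw [ha, hb, add_zero]
  zero_mem' := by simp
  smul_mem' := by
    intro c a ha
    simp only [Set.mem_ofPred_eq, Pi.smul_apply, ← Finset.smul_sum] at *
    rw [ha, smul_zero]

lemma mem_V0 {f : X → ℂ} : f ∈ V0 X ↔ ∑ x, f x = 0 := Iff.rfl

variable (G X) in
/-- permutation representation on `V0` -/
noncomputable def permRep : G →* End ℂ (V0 X) where
  toFun g :=
    { toFun := fun f => ⟨fun x => f.1 (g⁻¹ • x), by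
        rw [mem_V0, ← mem_V0.1 f.2]
        exact Equiv.sum_comp (MulAction.toPerm g⁻¹) f.1⟩
      map_add' := fun _ _ => rfl
      map_smul' := fun _ _ => rfl }
  map_one' := by
    ext f x
    simp
  map_mul' g h := by
    ext f x
    simp [mul_smul]

lemma permRep_apply (g : G) (f : V0 X) (x : X) : (permRep G X g f).1 x = f.1 (g⁻¹ • x) := rfl

lemma finrank_V0 [Nonempty X] : finrank ℂ (V0 X) = Fintype.card X - 1 := by
  classical
  have e : V0 X = LinearMap.ker (∑ x : X, LinearMap.proj (R := ℂ) (φ := fun _ : X => ℂ) x) := by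
    ext f
    simp [mem_V0]
  have h := LinearMap.finrank_range_add_finrank_ker
    (∑ x : X, LinearMap.proj (R := ℂ) (φ := fun _ : X => ℂ) x)
  have hs : LinearMap.range (∑ x : X, LinearMap.proj (R := ℂ) (φ := fun _ : X => ℂ) x) = ⊤ := by
    rw [LinearMap.range_eq_top]
    intro c
    obtain ⟨x⟩ := ‹Nonempty X›
    exact ⟨Pi.single x c, by simp⟩
  rw [hs, finrank_top, finrank_self, Module.finrank_fintype_fun_eq_card, ← e] at h
  omega

lemma permRep_irr [Finite G] [Nontrivial X]
    (h2 : ∀ a b c d : X, a ≠ b → c ≠ d → ∃ g : G, g • a = c ∧ g • b = d) : Irr (permRep G X) := by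
  classical
  intro W hW
  by_cases hb : W = ⊥
  · exact Or.inl hb
  right
  obtain ⟨f, hf, hf0⟩ := (Submodule.ne_bot_iff W).1 hb
  obtain ⟨x, hx⟩ : ∃ x, f.1 x ≠ 0 := by
    by_contra hc; push Not at hc; exact hf0 (Subtype.ext (funext hc))
  have inst := Fintype.ofFinite (MulAction.stabilizer G x)
  set u : V0 X := ∑ g : MulAction.stabilizer G x, permRep G X g.1 f with hu
  have huW : u ∈ W := Submodule.sum_mem _ fun g _ => hW _ _ hf
  have uval : ∀ z, u.1 z = ∑ g : MulAction.stabilizer G x, f.1 (g.1⁻¹ • z) := by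
    intro z
    rw [hu, Submodule.coe_sum, Finset.sum_apply]
    rfl
  obtain ⟨y, hy⟩ := exists_ne x
  set c := u.1 y with hc
  set a := u.1 x with ha
  have ha0 : a ≠ 0 := by
    rw [ha, uval]
    have : ∀ g : MulAction.stabilizer G x, f.1 (g.1⁻¹ • x) = f.1 x := by
      intro g
      exact congrArg f.1 (g⁻¹).2
    simp only [this, Finset.sum_const, nsmul_eq_mul]
    apply mul_ne_zero _ hx
    rw [Finset.card_univ]
    exact_mod_cast Fintype.card_ne_zero
  have hcst : ∀ z, z ≠ x → u.1 z = c := by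
    intro z hz
    obtain ⟨g, hg1, hg2⟩ := h2 x y x z hy.symm hz.symm
    rw [hc, uval, uval, ← hg2]
    have hgs : g ∈ MulAction.stabilizer G x := hg1
    refine Fintype.sum_equiv (Equiv.mulLeft (⟨g, hgs⟩⁻¹ : MulAction.stabilizer G x)) _ _ ?_
    intro k
    congr 1
    simp [mul_smul]
  have ueq : u.1 = fun z => (a - c) * (if z = x then 1 else 0) + c := by
    funext z
    split_ifs with h
    · rw [h]; ring
    · rw [hcst z h]; ring
  have hac : a - c ≠ 0 := by
    intro h
    have h0 := mem_V0.1 u.2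
    rw [ueq] at h0
    simp only [h, zero_mul, zero_add, Finset.sum_const, nsmul_eq_mul, Finset.card_univ] at h0
    rcases mul_eq_zero.1 h0 with h1 | h1
    · exact Fintype.card_ne_zero (α := X) (by exact_mod_cast h1)
    · rw [h1, sub_zero] at h; exact ha0 h
  have hall : ∀ w : X, ∃ v ∈ W, v.1 = fun z => (a - c) * (if z = w then 1 else 0) + c := by
    intro w
    obtain ⟨w', hw'⟩ := exists_ne w
    obtain ⟨g, hg, -⟩ := h2 x y w w' hy.symm hw'.symm
    refine ⟨_, hW g _ huW, ?_⟩
    funext z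
    rw [permRep_apply, ueq, ← hg]
    simp only [inv_smul_eq_iff]
  choose v hvW hv using hall
  rw [eq_top_iff]
  intro k _
  have : k = (a - c)⁻¹ • ∑ w, k.1 w • v w := by
    rw [eq_inv_smul_iff₀ hac]
    apply Subtype.ext
    funext z
    rw [Submodule.coe_sum, Finset.sum_apply]
    simp only [Submodule.coe_smul, Pi.smul_apply, hv, smul_eq_mul, mul_add, Finset.sum_add_distrib,
      ← Finset.sum_mul, mem_V0.1 k.2]
    simp
    ring
  rw [this]
  exact W.smul_mem _ (Submodule.sum_mem _ fun w _ => W.smul_mem _ (hvW w))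

lemma permRep_nontrivial [Nontrivial X]
    (h2 : ∀ a b c d : X, a ≠ b → c ≠ d → ∃ g : G, g • a = c ∧ g • b = d) : ∃ g, permRep G X g ≠ 1 := by
  classical
  obtain ⟨x, y, hxy⟩ := exists_pair_ne X
  obtain ⟨g, hg, hg'⟩ := h2 x y y x hxy hxy.symm
  refine ⟨g, fun h => ?_⟩
  have hm : (Pi.single x 1 - Pi.single y 1 : X → ℂ) ∈ V0 X := by
    rw [mem_V0]; simp
  have h1 := congrFun (congrArg Subtype.val (DFunLike.congr_fun h ⟨_, hm⟩)) y
  have h3 : g⁻¹ • y = x := by rw [← hg, inv_smul_smul]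
  rw [permRep_apply, h3] at h1
  simp [hxy, hxy.symm] at h1
  norm_num at h1
end perm

section transfer
variable {G : Type*} [Group G] {V : Type*} [AddCommGroup V] [Module ℂ V] [FiniteDimensional ℂ V]

lemma to_matrix {K : ℕ} (σ : G →* End ℂ V) (hσ : Irr σ) (hne : ∃ g, σ g ≠ 1)
    (hK : finrank ℂ V = K) : ∃ ρ : G →* GL (Fin K) ℂ, IrredMat ρ ∧ ρ ≠ 1 := by
  let b := finBasisOfFinrankEq ℂ V hK
  let ρ : G →* GL (Fin K) ℂ :=
    MonoidHom.toHomUnits (((LinearMap.toMatrixAlgEquiv b).toMulEquiv.toMonoidHom).comp σ)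
  have hρ : ∀ g, (ρ g : Matrix (Fin K) (Fin K) ℂ) = LinearMap.toMatrixAlgEquiv b (σ g) := fun g => rfl
  have hact : ∀ g v, (ρ g : Matrix (Fin K) (Fin K) ℂ).mulVec (b.equivFun v) = b.equivFun (σ g v) := by
    intro g v
    rw [hρ]
    exact LinearMap.toMatrix_mulVec_repr b b (σ g) v
  refine ⟨ρ, ?_, ?_⟩
  · intro W hW
    rcases hσ (W.comap b.equivFun.toLinearMap) (by
      intro g v hv
      rw [Submodule.mem_comap] at hv ⊢
      have := hW g _ hv
      erw [hact] at this
      exact this) with h | h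
    · left
      rw [eq_bot_iff]
      intro w hw
      have : b.equivFun.symm w ∈ W.comap b.equivFun.toLinearMap := by
        rw [Submodule.mem_comap, LinearEquiv.coe_coe, LinearEquiv.apply_symm_apply]
        exact hw
      rw [h, Submodule.mem_bot, LinearEquiv.map_eq_zero_iff] at this
      exact this
    · right
      rw [eq_top_iff]
      intro w _
      have : b.equivFun.symm w ∈ W.comap b.equivFun.toLinearMap := by rw [h]; trivial
      rw [Submodule.mem_comap, LinearEquiv.coe_coe, LinearEquiv.apply_symm_apply] at this
      exact this
  · intro h
    obtain ⟨g, hg⟩ := hne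
    apply hg
    apply (LinearMap.toMatrixAlgEquiv b).injective
    rw [← hρ, h, map_one]
    rfl

lemma of_matrix {K : ℕ} (ρ : G →* GL (Fin K) ℂ) (hρ : IrredMat ρ) (hne : ρ ≠ 1) :
    ∃ σ : G →* End ℂ (Fin K → ℂ), Irr σ ∧ ∃ g, σ g ≠ 1 := by
  let σ : G →* End ℂ (Fin K → ℂ) :=
    ((Matrix.toLinAlgEquiv' (R := ℂ) (n := Fin K)).toMulEquiv.toMonoidHom).comp
      ((Units.coeHom (Matrix (Fin K) (Fin K) ℂ)).comp ρ)
  refine ⟨σ, fun W hW => hρ W hW, ?_⟩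
  by_contra hc
  push Not at hc
  apply hne
  ext1 g
  apply Units.ext
  apply (Matrix.toLinAlgEquiv' (R := ℂ) (n := Fin K)).injective
  have h1 := hc g
  rw [MonoidHom.one_apply, Units.val_one, map_one]
  exact h1
end transfer
end TZ

/-- **Tiep–Zalesskii.**  For a prime `p` and `n ≥ 5`, the smallest dimension of a
nontrivial irreducible complex representation of `SL_n(ℤ/pℤ)` is `(p^n − p)/(p − 1)`:
every nontrivial irreducible representation has at least this dimension, and there is
an irreducible nontrivial representation of exactly this dimension. -/
theorem minimal_dim_nontrivial_irreducible_SL_mod_p (p n : ℕ) (hp : p.Prime) (hn : 5 ≤ n) :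
    (∀ (N : ℕ) (ρ : Matrix.SpecialLinearGroup (Fin n) (ZMod p) →* GL (Fin N) ℂ),
        IrredMat ρ → ρ ≠ 1 → (p ^ n - p) / (p - 1) ≤ N) ∧
    ∃ ρ : Matrix.SpecialLinearGroup (Fin n) (ZMod p) →*
        GL (Fin ((p ^ n - p) / (p - 1))) ℂ,
      IrredMat ρ ∧ ρ ≠ 1 := by
  have : Fact p.Prime := ⟨hp⟩
  constructor
  · intro N ρ hρ hne
    obtain ⟨σ, hσ, hg⟩ := TZ.of_matrix ρ hρ hne
    have := TZ.lower_bound (by simpa using hn) σ hσ hg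
    simpa using this
  · classical
    obtain ⟨M, hR, hM, ht⟩ := TZ.card_proj (ι := Fin n) p (by simp; omega)
    rw [Fintype.card_fin] at ht hM
    have hp2 := hp.two_le
    have := Fintype.ofFinite (Projectivization (ZMod p) (Fin n → ZMod p))
    rw [Nat.card_eq_fintype_card] at hR
    have hM0 : 0 < M := by
      rcases Nat.eq_zero_or_pos M with h | h
      · exfalso
        rw [h, mul_zero, zero_add, ← pow_succ'] at hM
        have := Nat.one_lt_pow (a := p) (n := n - 2 + 1) (by omega) (by omega)
        omega
      · exact h
    have : Nontrivial (Projectivization (ZMod p) (Fin n → ZMod p)) := by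
      rw [← Fintype.one_lt_card_iff_nontrivial, hR]
      have := Nat.mul_pos hp.pos hM0
      omega
    have h2 : ∀ a b c d : Projectivization (ZMod p) (Fin n → ZMod p), a ≠ b → c ≠ d →
        ∃ g : Matrix.SpecialLinearGroup (Fin n) (ZMod p), g • a = c ∧ g • b = d :=
      fun a b c d h h' => TZ.two_trans h h'
    refine TZ.to_matrix _ (TZ.permRep_irr h2) (TZ.permRep_nontrivial h2) ?_
    rw [TZ.finrank_V0, hR, ht]
    rfl
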